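/- arXiv:2602.12067 — 3 statements merged into one kernel-verified Lean document; each statement's English description precedes it below -/
import Mathlib

section
/- There exists a constant C > 0, independent of x and q, such that for every x ∈ (0,∞) and every q ∈ ℝ³ one has I₂^{(q)}(x) ≤ C (x^{−2} + x³)/(1 + |q|⁴). -/
open MeasureTheory
open scoped ENNReal

noncomputable abbrev E3 := EuclideanSpace ℝ (Fin 3)

/-- The Belyakov-type integral `I₂^{(q)}(x)` of Lemma B.2, with the Dirac deltas
`δ(r-q)` and `δ(r+p-q)` evaluated explicitly. -/
noncomputable def belyakovI2q (x : ℝ) (q : E3) : ℝ≥0∞ :=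
  ∫⁻ p : E3,
    ({p : E3 | ‖q‖ < 1 ∧ 1 < ‖q + p‖}.indicator
      (fun p => ∫⁻ r' in {r' : E3 | ‖r'‖ < x ∧ x < ‖r' - p‖},
        ENNReal.ofReal (1 / (‖q + p‖ ^ 2 - ‖q‖ ^ 2 + ‖r' - p‖ ^ 2 - ‖r'‖ ^ 2) ^ 2)) p)
    +
    ({p : E3 | ‖q - p‖ < 1 ∧ 1 < ‖q‖}.indicator
      (fun p => ∫⁻ r' in {r' : E3 | ‖r'‖ < x ∧ x < ‖r' - p‖},
        ENNReal.ofReal (1 / (‖q‖ ^ 2 - ‖q - p‖ ^ 2 + ‖r' - p‖ ^ 2 - ‖r'‖ ^ 2) ^ 2)) p)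

/-!
With `k = q + p` resp. `k = q - p`, both terms ask for one bound on the inner integral: exactly one
of `‖q‖`, `‖k‖` is below `1`, the energy gap of the outer pair is `a = |‖k‖ ^ 2 - ‖q‖ ^ 2|`, and
`‖p‖ = ‖k - q‖`. The gap `c = ‖r - p‖ ^ 2 - ‖r‖ ^ 2` of the inner pair is constant on the planes
orthogonal to `p`, which meet the domain of integration in annuli of area at most `π c`. This
cancels one power of the double pole `(a + c) ^ (-2)`, and weighted AM-GM in `a` and `c` leaves
integrable singularities at `k = q` and on the Fermi sphere `‖k‖ = 1`. If `‖k‖` or `‖q‖` is at least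
`4`, then `a` is comparable to `(1 + ‖k‖) ^ 2 * (1 + ‖q‖) ^ 2`, and the trivial bound `a ^ (-2)` on
the integrand decays like `‖q‖ ^ (-4)` and is integrable in `k`.
-/

open Set Metric Module
open scoped Real RealInnerProductSpace

section OrthogonalSlices

variable {E : Type*} [NormedAddCommGroup E] [InnerProductSpace ℝ E]

lemma norm_smul_add_orthogonal_sq {v : E} (hv : ‖v‖ = 1) (t : ℝ) (y : (ℝ ∙ v)ᗮ) :
    ‖t • v + (y : E)‖ ^ 2 = t ^ 2 + ‖y‖ ^ 2 := by
  have horth : ⟪t • v, (y : E)⟫ = 0 := by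
    rw [real_inner_smul_left, Submodule.mem_orthogonal_singleton_iff_inner_right.1 y.2, mul_zero]
  rw [pow_two, norm_add_sq_eq_norm_sq_add_norm_sq_real horth, norm_smul, hv]
  simp [← pow_two]

variable [FiniteDimensional ℝ E] [MeasurableSpace E] [BorelSpace E]

lemma measurePreserving_smul_add_orthogonal {v : E} (hv : ‖v‖ = 1) :
    MeasurePreserving (fun z : ℝ × (ℝ ∙ v)ᗮ => z.1 • v + (z.2 : E)) := by
  have hline : MeasurePreserving
      (Prod.map (LinearIsometryEquiv.toSpanUnitSingleton (𝕜 := ℝ) v hv)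
        (id : (ℝ ∙ v)ᗮ → (ℝ ∙ v)ᗮ)) :=
    (LinearIsometryEquiv.measurePreserving _).prod (.id _)
  have hsum := (ℝ ∙ v).orthogonalDecomposition.symm.measurePreserving.comp
    ((WithLp.volume_preserving_toLp (ℝ ∙ v) (ℝ ∙ v)ᗮ).comp hline)
  convert! hsum using 2 with z

lemma lintegral_eq_lintegral_smul_add_orthogonal {v : E} (hv : ‖v‖ = 1) {f : E → ℝ≥0∞}
    (hf : Measurable f) :
    ∫⁻ r, f r = ∫⁻ t : ℝ, ∫⁻ y : (ℝ ∙ v)ᗮ, f (t • v + (y : E)) := by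
  have hmp := measurePreserving_smul_add_orthogonal hv
  rw [← hmp.lintegral_comp hf]
  exact lintegral_prod _ (hf.comp hmp.measurable).aemeasurable

lemma volume_norm_sq_mem_Ioo_le (hE : finrank ℝ E = 2) (A B : ℝ) :
    volume {y : E | ‖y‖ ^ 2 ∈ Ioo A B} ≤ ENNReal.ofReal (π * (B - A)) := by
  have : Nontrivial E := nontrivial_of_finrank_pos (R := ℝ) (by lia)
  have volume_ball_sqrt (R : ℝ) :
      volume (ball (0 : E) √R) = ENNReal.ofReal (π * max R 0) := by
    rw [InnerProductSpace.volume_ball_of_dim_even (k := 1) hE, hE,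
      ← ENNReal.ofReal_pow (by positivity), Real.sq_sqrt', ← ENNReal.ofReal_mul (by positivity)]
    simp [mul_comm]
  rcases le_or_gt B A with hBA | hAB
  · simp [Ioo_eq_empty hBA.not_gt]
  calc volume {y : E | ‖y‖ ^ 2 ∈ Ioo A B}
      ≤ volume (ball (0 : E) √B \ ball 0 √A) := by
        refine measure_mono fun y hy => ⟨?_, ?_⟩
        · simpa using Real.lt_sqrt_of_sq_lt hy.2
        · simpa using Real.sqrt_le_left (norm_nonneg y) |>.2 hy.1.le
    _ = ENNReal.ofReal (π * max B 0 - π * max A 0) := by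
        rw [measure_sdiff (ball_subset_ball (Real.sqrt_le_sqrt hAB.le))
          measurableSet_ball.nullMeasurableSet measure_ball_lt_top.ne, volume_ball_sqrt,
          volume_ball_sqrt, ENNReal.ofReal_sub _ (by positivity)]
    _ ≤ ENNReal.ofReal (π * (B - A)) := by
        have hmax : max B 0 ≤ max A 0 + (B - A) :=
          max_le (by linarith [le_max_left A 0]) (by linarith [le_max_right A 0])
        rw [← mul_sub]
        exact ENNReal.ofReal_le_ofReal (mul_le_mul_of_nonneg_left (by linarith) Real.pi_nonneg)

end OrthogonalSlices

section RealIntegrals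

lemma lintegral_comp_const_sub_mul {m : ℝ} (hm : 0 < m) (b : ℝ) (f : ℝ → ℝ≥0∞) :
    ∫⁻ t, f (b - m * t) = ENNReal.ofReal m⁻¹ * ∫⁻ c, f c := by
  have hsurj : Function.Surjective fun t => b - m * t :=
    fun c => ⟨(b - c) / m, by field_simp; ring⟩
  have hinj : Function.Injective fun t => b - m * t := fun s t h => by
    simpa [hm.ne'] using h
  have hderiv (t : ℝ) : HasDerivAt (fun t => b - m * t) (-m) t := by
    simpa using ((hasDerivAt_id t).const_mul m).const_sub b
  have hsubst := lintegral_image_eq_lintegral_abs_deriv_mul MeasurableSet.univ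
    (fun t _ => (hderiv t).hasDerivWithinAt) hinj.injOn f
  rw [image_univ, hsurj.range_eq, setLIntegral_univ, setLIntegral_univ, abs_neg, abs_of_pos hm,
    lintegral_const_mul' _ _ ENNReal.ofReal_ne_top] at hsubst
  rw [hsubst, ← mul_assoc, ← ENNReal.ofReal_mul (by positivity), inv_mul_cancel₀ hm.ne',
    ENNReal.ofReal_one, one_mul]

lemma lintegral_Ioo_rpow_sub_one {M w : ℝ} (hM : 0 ≤ M) (hw : 0 < w) :
    ∫⁻ c in Ioo 0 M, ENNReal.ofReal (c ^ (w - 1)) = ENNReal.ofReal (M ^ w / w) := by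
  have hint : IntegrableOn (fun c : ℝ => c ^ (w - 1)) (Ioc 0 M) := by
    rw [← intervalIntegrable_iff_integrableOn_Ioc_of_le hM]
    exact intervalIntegral.intervalIntegrable_rpow' (by linarith)
  rw [← ofReal_integral_eq_lintegral_ofReal (hint.mono_set Ioo_subset_Ioc_self),
    ← integral_Ioc_eq_integral_Ioo, ← intervalIntegral.integral_of_le hM,
    integral_rpow (.inl (by linarith)), sub_add_cancel, Real.zero_rpow hw.ne', sub_zero]
  filter_upwards [ae_restrict_mem measurableSet_Ioo] with c hc
  exact Real.rpow_nonneg hc.1.le _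

lemma one_div_add_sq_mul_le {a c w : ℝ} (ha : 0 < a) (hc : 0 < c) (hw₀ : 0 ≤ w) (hw₁ : w ≤ 1) :
    1 / (a + c) ^ 2 * c ≤ a ^ (-w) * c ^ (w - 1) := by
  have hmean : a ^ w * c ^ (1 - w) ≤ a + c :=
    calc a ^ w * c ^ (1 - w) ≤ w * a + (1 - w) * c :=
          Real.geom_mean_le_arith_mean2_weighted hw₀ (by linarith) ha.le hc.le (by ring)
      _ ≤ a + c := by nlinarith
  calc 1 / (a + c) ^ 2 * c ≤ (a + c)⁻¹ := by
        rw [one_div_mul_eq_div, div_le_iff₀ (by positivity), pow_two,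
          inv_mul_cancel_left₀ (by positivity)]
        linarith
    _ ≤ (a ^ w * c ^ (1 - w))⁻¹ := by gcongr
    _ = a ^ (-w) * c ^ (w - 1) := by
        rw [mul_inv, ← Real.rpow_neg ha.le, ← Real.rpow_neg hc.le, neg_sub]

end RealIntegrals

section Lune

variable {E : Type*} [NormedAddCommGroup E]

/-- The ball of radius `x` about `0` with the closed ball of radius `x` about `p` removed: the
domain of the inner integral in `belyakovI2q`. -/
def lune (x : ℝ) (p : E) : Set E := {r | ‖r‖ < x ∧ x < ‖r - p‖}

lemma isOpen_lune (x : ℝ) (p : E) : IsOpen (lune x p) :=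
  (isOpen_lt (by fun_prop) (by fun_prop)).and (isOpen_lt (by fun_prop) (by fun_prop))

variable [MeasureSpace E]

/-- The inner integral of `belyakovI2q`, where `a` is the energy gap of the outer pair of
momenta. -/
noncomputable def luneIntegral (x a : ℝ) (p : E) : ℝ≥0∞ :=
  ∫⁻ r in lune x p, ENNReal.ofReal (1 / (a + ‖r - p‖ ^ 2 - ‖r‖ ^ 2) ^ 2)

lemma luneIntegral_le_volume_ball [BorelSpace E] {a : ℝ} (ha : 0 < a) (x : ℝ) (p : E) :
    luneIntegral x a p ≤ ENNReal.ofReal (1 / a ^ 2) * volume (ball (0 : E) x) :=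
  calc luneIntegral x a p ≤ ∫⁻ _ in lune x p, ENNReal.ofReal (1 / a ^ 2) := by
        refine setLIntegral_mono' (isOpen_lune x p).measurableSet fun r hr => ?_
        have : ‖r‖ ^ 2 ≤ ‖r - p‖ ^ 2 := by gcongr; exact (hr.1.trans hr.2).le
        gcongr
        linarith
    _ ≤ ENNReal.ofReal (1 / a ^ 2) * volume (ball (0 : E) x) := by
        rw [setLIntegral_const]
        gcongr
        exact fun r hr => by simpa using hr.1

end Lune

section LuneSlices

variable {E : Type*} [NormedAddCommGroup E] [InnerProductSpace ℝ E]

lemma norm_sub_smul_sq_of_smul_add_orthogonal {v : E} (hv : ‖v‖ = 1) (s t : ℝ) (y : (ℝ ∙ v)ᗮ) :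
    ‖t • v + (y : E) - s • v‖ ^ 2 = (t - s) ^ 2 + ‖y‖ ^ 2 := by
  rw [← norm_smul_add_orthogonal_sq hv]
  congr 2
  module

lemma mem_Ioo_of_smul_add_orthogonal_mem_lune {v : E} (hv : ‖v‖ = 1) {x P t : ℝ} (hP : 0 < P)
    {y : (ℝ ∙ v)ᗮ} (hr : t • v + (y : E) ∈ lune x (P • v)) :
    P ^ 2 - 2 * P * t ∈ Ioo 0 (P * (P + 2 * x)) ∧
      ‖y‖ ^ 2 ∈ Ioo (x ^ 2 - (t - P) ^ 2) (x ^ 2 - t ^ 2) := by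
  have hx : 0 < x := (norm_nonneg _).trans_lt hr.1
  have hin : t ^ 2 + ‖y‖ ^ 2 < x ^ 2 := by
    rw [← norm_smul_add_orthogonal_sq hv]; gcongr; exact hr.1
  have hout : x ^ 2 < (t - P) ^ 2 + ‖y‖ ^ 2 := by
    rw [← norm_sub_smul_sq_of_smul_add_orthogonal hv]; gcongr; exact hr.2
  have ht : -x < t := (abs_lt_of_sq_lt_sq' (by nlinarith) hx.le).1
  exact ⟨⟨by linarith, by nlinarith⟩, by linarith, by linarith⟩

variable [FiniteDimensional ℝ E] [MeasurableSpace E] [BorelSpace E]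

/- The energy gap is constant on planes orthogonal to `p`, and in three dimensions each plane meets
the lune in an annulus whose area is `π` times the gap. -/
lemma setLIntegral_lune_smul_le (hE : finrank ℝ E = 3) {g : ℝ → ℝ≥0∞} (hg : Measurable g)
    {v : E} (hv : ‖v‖ = 1) (x : ℝ) {P : ℝ} (hP : 0 < P) :
    ∫⁻ r in lune x (P • v), g (‖r - P • v‖ ^ 2 - ‖r‖ ^ 2) ≤
      ENNReal.ofReal (2 * P)⁻¹ *
        ∫⁻ c in Ioo 0 (P * (P + 2 * x)), g c * ENNReal.ofReal (π * c) := by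
  have hplane : finrank ℝ (ℝ ∙ v)ᗮ = 2 :=
    have : Fact (finrank ℝ E = 2 + 1) := ⟨hE⟩
    Submodule.finrank_orthogonal_span_singleton (norm_ne_zero_iff.1 (by simp [hv]))
  let f : E → ℝ≥0∞ := (lune x (P • v)).indicator fun r => g (‖r - P • v‖ ^ 2 - ‖r‖ ^ 2)
  let gap (t : ℝ) : ℝ := P ^ 2 - 2 * P * t
  let h : ℝ → ℝ≥0∞ := (Ioo 0 (P * (P + 2 * x))).indicator g
  let annulus (t : ℝ) : Set (ℝ ∙ v)ᗮ := {y | ‖y‖ ^ 2 ∈ Ioo (x ^ 2 - (t - P) ^ 2) (x ^ 2 - t ^ 2)}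
  have hf : Measurable f := (by fun_prop : Measurable _).indicator (isOpen_lune x _).measurableSet
  have hfiber (t : ℝ) (y : (ℝ ∙ v)ᗮ) :
      f (t • v + (y : E)) ≤ (annulus t).indicator (fun _ => h (gap t)) y := by
    refine indicator_apply_le' (fun hr => ?_) fun _ => zero_le
    obtain ⟨hgap, hy⟩ := mem_Ioo_of_smul_add_orthogonal_mem_lune hv hP hr
    rw [indicator_of_mem (show y ∈ annulus t from hy),
      show h (gap t) = g (gap t) from indicator_of_mem hgap g, norm_smul_add_orthogonal_sq hv,
      norm_sub_smul_sq_of_smul_add_orthogonal hv]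
    exact le_of_eq (congrArg g (by ring))
  calc ∫⁻ r in lune x (P • v), g (‖r - P • v‖ ^ 2 - ‖r‖ ^ 2)
      = ∫⁻ t : ℝ, ∫⁻ y : (ℝ ∙ v)ᗮ, f (t • v + (y : E)) := by
        rw [← lintegral_indicator (isOpen_lune x _).measurableSet]
        exact lintegral_eq_lintegral_smul_add_orthogonal hv hf
    _ ≤ ∫⁻ t, h (gap t) * ENNReal.ofReal (π * gap t) := by
        refine lintegral_mono fun t => (lintegral_mono (hfiber t)).trans ?_
        refine (lintegral_indicator_const_le _ _).trans ?_
        gcongr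
        refine (volume_norm_sq_mem_Ioo_le hplane _ _).trans_eq ?_
        congr 2
        ring
    _ = ENNReal.ofReal (2 * P)⁻¹ *
          ∫⁻ c in Ioo 0 (P * (P + 2 * x)), g c * ENNReal.ofReal (π * c) := by
        rw [lintegral_comp_const_sub_mul (by positivity) _ fun c => h c * ENNReal.ofReal (π * c),
          ← lintegral_indicator measurableSet_Ioo]
        simp only [h, indicator_mul_left]

lemma setLIntegral_lune_le (hE : finrank ℝ E = 3) {g : ℝ → ℝ≥0∞} (hg : Measurable g) (x : ℝ)
    {p : E} (hp : p ≠ 0) :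
    ∫⁻ r in lune x p, g (‖r - p‖ ^ 2 - ‖r‖ ^ 2) ≤
      ENNReal.ofReal (2 * ‖p‖)⁻¹ *
        ∫⁻ c in Ioo 0 (‖p‖ * (‖p‖ + 2 * x)), g c * ENNReal.ofReal (π * c) := by
  have hslices := setLIntegral_lune_smul_le hE hg (v := ‖p‖⁻¹ • p) (norm_smul_inv_norm hp) x
    (norm_pos_iff.2 hp)
  rwa [smul_inv_smul₀ (norm_ne_zero_iff.2 hp)] at hslices

lemma luneIntegral_le_rpow (hE : finrank ℝ E = 3) {x a w : ℝ} (hx : 0 ≤ x) (ha : 0 < a)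
    (hw₀ : 0 < w) (hw₁ : w ≤ 1) {p : E} (hp : p ≠ 0) :
    luneIntegral x a p ≤
      ENNReal.ofReal (π / (2 * w) * a ^ (-w) * ‖p‖ ^ (w - 1) * (‖p‖ + 2 * x) ^ w) := by
  have hP : 0 < ‖p‖ := norm_pos_iff.2 hp
  have hgap {c : ℝ} (hc : 0 < c) :
      1 / (a + c) ^ 2 * (π * c) ≤ π * a ^ (-w) * c ^ (w - 1) := by
    linarith [mul_le_mul_of_nonneg_left (one_div_add_sq_mul_le ha hc hw₀.le hw₁) Real.pi_nonneg]
  calc luneIntegral x a p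
      ≤ ENNReal.ofReal (2 * ‖p‖)⁻¹ * ∫⁻ c in Ioo 0 (‖p‖ * (‖p‖ + 2 * x)),
          ENNReal.ofReal (1 / (a + c) ^ 2) * ENNReal.ofReal (π * c) := by
        simp only [luneIntegral, add_sub_assoc]
        exact setLIntegral_lune_le hE (g := fun c => ENNReal.ofReal (1 / (a + c) ^ 2))
          (by fun_prop) x hp
    _ ≤ ENNReal.ofReal (2 * ‖p‖)⁻¹ * ∫⁻ c in Ioo 0 (‖p‖ * (‖p‖ + 2 * x)),
          ENNReal.ofReal (π * a ^ (-w)) * ENNReal.ofReal (c ^ (w - 1)) := by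
        gcongr ENNReal.ofReal (2 * ‖p‖)⁻¹ * ?_
        refine setLIntegral_mono' measurableSet_Ioo fun c hc => ?_
        rw [← ENNReal.ofReal_mul (by positivity), ← ENNReal.ofReal_mul (by positivity)]
        exact ENNReal.ofReal_le_ofReal (hgap hc.1)
    _ = ENNReal.ofReal (π / (2 * w) * a ^ (-w) * ‖p‖ ^ (w - 1) * (‖p‖ + 2 * x) ^ w) := by
        rw [lintegral_const_mul' _ _ ENNReal.ofReal_ne_top,
          lintegral_Ioo_rpow_sub_one (by positivity) hw₀, ← ENNReal.ofReal_mul (by positivity),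
          ← ENNReal.ofReal_mul (by positivity), Real.mul_rpow hP.le (by positivity),
          Real.rpow_sub_one hP.ne']
        congr 1
        field_simp

end LuneSlices

section Weights

lemma lintegral_ball_norm_rpow_lt_top {E : Type*} [NormedAddCommGroup E] [NormedSpace ℝ E]
    [FiniteDimensional ℝ E] [Nontrivial E] [MeasurableSpace E] [BorelSpace E] (μ : Measure E)
    [μ.IsAddHaarMeasure] {s : ℝ} (hs : s < finrank ℝ E) (R : ℝ) :
    ∫⁻ p in ball (0 : E) R, ENNReal.ofReal (‖p‖ ^ (-s)) ∂μ < ∞ := by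
  refine (integrableOn_ball_of_norm_le_rpow (C := 1) finrank_pos hs (.of_forall fun p => ?_)
    (Measurable.aestronglyMeasurable (by fun_prop))).lintegral_lt_top
  rw [Real.norm_of_nonneg (by positivity), one_mul]

lemma intervalIntegrable_abs_sub_rpow {s : ℝ} (hs : s < 1) (ρ a b : ℝ) :
    IntervalIntegrable (fun y : ℝ => |y - ρ| ^ (-s)) volume a b := by
  have hpos (c : ℝ) (hc : 0 ≤ c) : IntervalIntegrable (fun y : ℝ => |y| ^ (-s)) volume 0 c :=
    (intervalIntegral.intervalIntegrable_rpow' (r := -s) (by linarith)).congr fun y hy => by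
      rw [uIoc_of_le hc] at hy
      simp only [abs_of_pos hy.1]
  have hzero (c : ℝ) : IntervalIntegrable (fun y : ℝ => |y| ^ (-s)) volume 0 c := by
    rcases le_total 0 c with hc | hc
    · exact hpos c hc
    · simpa using (hpos (-c) (by linarith)).comp_mul_left (c := -1)
  simpa using ((hzero (a - ρ)).symm.trans (hzero (b - ρ))).comp_sub_right ρ

lemma lintegral_ball_abs_norm_sub_rpow_lt_top {E : Type*} [NormedAddCommGroup E] [NormedSpace ℝ E]
    [FiniteDimensional ℝ E] [Nontrivial E] [MeasurableSpace E] [BorelSpace E] (μ : Measure E)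
    [μ.IsAddHaarMeasure] {s : ℝ} (hs : s < 1) (ρ R : ℝ) :
    ∫⁻ k in ball (0 : E) R, ENNReal.ofReal (|‖k‖ - ρ| ^ (-s)) ∂μ < ∞ := by
  rcases le_or_gt R 0 with hR | hR
  · simp [ball_eq_empty.2 hR]
  refine Integrable.lintegral_lt_top
    ((integrableOn_fun_norm_addHaar μ (f := fun y => |y - ρ| ^ (-s))).2 ?_)
  rw [← intervalIntegrable_iff_integrableOn_Ioo_of_le hR.le]
  exact (intervalIntegrable_abs_sub_rpow hs ρ 0 R).continuousOn_mul (by fun_prop)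

/-- Singularity at coinciding momenta, cut off at distance `8`. -/
noncomputable def originWeight : E3 → ℝ≥0∞ :=
  (ball 0 8).indicator fun p => ENNReal.ofReal (‖p‖ ^ (-(3 / 2) : ℝ))

/-- Singularity on the Fermi sphere `‖k‖ = 1`, cut off at `‖k‖ = 4`. -/
noncomputable def sphereWeight : E3 → ℝ≥0∞ :=
  (ball 0 4).indicator fun k => ENNReal.ofReal (|‖k‖ - 1| ^ (-(1 / 2) : ℝ))

/-- Up to a factor depending on `x` and `q`, an integrable majorant of the inner integral of
`belyakovI2q`, as a function of the momentum `k = q + p` resp. `k = q - p`. -/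
noncomputable def majorant (q k : E3) : ℝ≥0∞ :=
  originWeight (k - q) + sphereWeight k + ENNReal.ofReal ((1 + ‖k‖) ^ (-4 : ℝ))

lemma measurable_originWeight : Measurable originWeight :=
  Measurable.indicator (by fun_prop) measurableSet_ball

lemma measurable_sphereWeight : Measurable sphereWeight :=
  Measurable.indicator (by fun_prop) measurableSet_ball

lemma lintegral_originWeight_lt_top : ∫⁻ p, originWeight p < ∞ := by
  rw [originWeight, lintegral_indicator measurableSet_ball]
  exact lintegral_ball_norm_rpow_lt_top volume (by norm_num) 8

lemma lintegral_sphereWeight_lt_top : ∫⁻ k, sphereWeight k < ∞ := by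
  rw [sphereWeight, lintegral_indicator measurableSet_ball]
  exact lintegral_ball_abs_norm_sub_rpow_lt_top volume (by norm_num) 1 4

lemma measurable_majorant (q : E3) : Measurable (majorant q) := by
  have := measurable_originWeight
  have := measurable_sphereWeight
  unfold majorant
  fun_prop

lemma lintegral_majorant (q : E3) :
    ∫⁻ k, majorant q k = (∫⁻ p, originWeight p) + (∫⁻ k, sphereWeight k) +
      ∫⁻ k : E3, ENNReal.ofReal ((1 + ‖k‖) ^ (-4 : ℝ)) := by
  have := measurable_originWeight
  simp only [majorant]
  rw [lintegral_add_right _ (by fun_prop), lintegral_add_right _ measurable_sphereWeight,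
    lintegral_sub_right_eq_self]

lemma exists_lintegral_majorant_le :
    ∃ M : ℝ, 0 < M ∧ ∀ q, ∫⁻ k, majorant q k ≤ ENNReal.ofReal M := by
  have htail : ∫⁻ k : E3, ENNReal.ofReal ((1 + ‖k‖) ^ (-4 : ℝ)) < ∞ :=
    finite_integral_one_add_norm (by norm_num)
  have hfinite : ∫⁻ k, majorant 0 k ≠ ∞ := by
    rw [lintegral_majorant]
    exact (ENNReal.add_lt_top.2 ⟨ENNReal.add_lt_top.2
      ⟨lintegral_originWeight_lt_top, lintegral_sphereWeight_lt_top⟩, htail⟩).ne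
  refine ⟨(∫⁻ k, majorant 0 k).toReal + 1, by positivity, fun q => ?_⟩
  rw [lintegral_majorant q, ← lintegral_majorant 0, ENNReal.le_ofReal_iff_toReal_le hfinite
    (by positivity)]
  linarith

end Weights

section PointwiseBounds

/- AM-GM separates the two singular factors of `luneIntegral_le_rpow`; the exponent `w = 1 / 4`
makes both squares locally integrable. -/
lemma luneIntegral_le_of_norm_lt {E : Type*} [NormedAddCommGroup E] [InnerProductSpace ℝ E]
    [FiniteDimensional ℝ E] [MeasurableSpace E] [BorelSpace E] (hE : finrank ℝ E = 3) {x a : ℝ}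
    (hx : 0 ≤ x) (ha : 0 < a) {p : E} (hp₀ : p ≠ 0) (hp : ‖p‖ < 8) :
    luneIntegral x a p ≤ ENNReal.ofReal
      (10 * π * (1 + x ^ 3) * (‖p‖ ^ (-(3 / 2) : ℝ) + a ^ (-(1 / 2) : ℝ))) := by
  have hP : 0 < ‖p‖ := norm_pos_iff.2 hp₀
  have hgrowth : (‖p‖ + 2 * x) ^ (1 / 4 : ℝ) ≤ 10 * (1 + x ^ 3) :=
    have hx_cube : x ≤ 1 + x ^ 3 := by nlinarith [mul_nonneg hx (sq_nonneg (x - 1))]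
    calc (‖p‖ + 2 * x) ^ (1 / 4 : ℝ) ≤ (10 * (1 + x ^ 3)) ^ (1 / 4 : ℝ) := by
          gcongr; nlinarith [pow_nonneg hx 3]
      _ ≤ 10 * (1 + x ^ 3) :=
          Real.rpow_le_self_of_one_le (by linarith [pow_nonneg hx 3]) (by norm_num)
  have hamgm : 2 * (a ^ (-(1 / 4) : ℝ) * ‖p‖ ^ (1 / 4 - 1 : ℝ)) ≤
      ‖p‖ ^ (-(3 / 2) : ℝ) + a ^ (-(1 / 2) : ℝ) := by
    have hsq_p : (‖p‖ ^ (1 / 4 - 1 : ℝ)) ^ 2 = ‖p‖ ^ (-(3 / 2) : ℝ) := by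
      rw [← Real.rpow_mul_natCast hP.le]; norm_num
    have hsq_a : (a ^ (-(1 / 4) : ℝ)) ^ 2 = a ^ (-(1 / 2) : ℝ) := by
      rw [← Real.rpow_mul_natCast ha.le]; norm_num
    rw [← hsq_p, ← hsq_a]
    linarith [two_mul_le_add_sq (a ^ (-(1 / 4) : ℝ)) (‖p‖ ^ (1 / 4 - 1 : ℝ))]
  refine (luneIntegral_le_rpow hE hx ha (w := 1 / 4) (by norm_num) (by norm_num) hp₀).trans
    (ENNReal.ofReal_le_ofReal ?_)
  calc π / (2 * (1 / 4)) * a ^ (-(1 / 4) : ℝ) * ‖p‖ ^ (1 / 4 - 1 : ℝ) *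
        (‖p‖ + 2 * x) ^ (1 / 4 : ℝ)
      = π * (2 * (a ^ (-(1 / 4) : ℝ) * ‖p‖ ^ (1 / 4 - 1 : ℝ))) *
          (‖p‖ + 2 * x) ^ (1 / 4 : ℝ) := by ring
    _ ≤ π * (‖p‖ ^ (-(3 / 2) : ℝ) + a ^ (-(1 / 2) : ℝ)) * (10 * (1 + x ^ 3)) := by gcongr
    _ = 10 * π * (1 + x ^ 3) * (‖p‖ ^ (-(3 / 2) : ℝ) + a ^ (-(1 / 2) : ℝ)) := by ring

lemma abs_sub_one_le_abs_sq_sub_sq {u v : ℝ} (hu : 0 ≤ u) (hv : 0 ≤ v)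
    (hsep : v < 1 ∧ 1 < u ∨ u < 1 ∧ 1 < v) : |u - 1| ≤ |u ^ 2 - v ^ 2| := by
  rcases hsep with ⟨hv₁, hu₁⟩ | ⟨hu₁, hv₁⟩
  · rw [abs_of_pos (by linarith)]
    exact le_abs.2 (.inl (by nlinarith))
  · rw [abs_of_neg (by linarith)]
    exact le_abs.2 (.inr (by nlinarith))

lemma one_add_sq_mul_one_add_sq_le_abs_sq_sub_sq {u v : ℝ} (hu : 0 ≤ u) (hv : 0 ≤ v)
    (hsep : v < 1 ∧ 1 < u ∨ u < 1 ∧ 1 < v) (hfar : 4 ≤ u ∨ 4 ≤ v) :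
    (1 + u) ^ 2 * (1 + v) ^ 2 ≤ 7 * |u ^ 2 - v ^ 2| := by
  have hordered {s t : ℝ} (hs : 0 ≤ s) (hs₁ : s < 1) (ht : 4 ≤ t) :
      (1 + t) ^ 2 * (1 + s) ^ 2 ≤ 7 * (t ^ 2 - s ^ 2) :=
    calc (1 + t) ^ 2 * (1 + s) ^ 2 ≤ (1 + t) ^ 2 * 2 ^ 2 := by gcongr; linarith
      _ ≤ 7 * (t ^ 2 - s ^ 2) := by nlinarith
  rcases hsep with ⟨hv₁, hu₁⟩ | ⟨hu₁, hv₁⟩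
  · rw [abs_of_pos (by nlinarith)]
    exact hordered hv hv₁ (hfar.resolve_right (by linarith))
  · rw [abs_sub_comm, abs_of_pos (by nlinarith), mul_comm]
    exact hordered hu hu₁ (hfar.resolve_left (by linarith))

variable {x : ℝ} {q k p : E3}

/- `2570 = 10 * (1 + 4 ^ 4)`, where `4 ^ 4` bounds `‖q‖ ^ 4`. -/
lemma luneIntegral_le_weights (hx : 0 ≤ x) (hp : ‖p‖ = ‖k - q‖)
    (hsep : ‖q‖ < 1 ∧ 1 < ‖k‖ ∨ ‖k‖ < 1 ∧ 1 < ‖q‖) (hk : ‖k‖ < 4) (hq : ‖q‖ < 4) :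
    luneIntegral x |‖k‖ ^ 2 - ‖q‖ ^ 2| p ≤
      ENNReal.ofReal (2570 * π * (1 + x ^ 3) / (1 + ‖q‖ ^ 4)) *
        (originWeight (k - q) + sphereWeight k) := by
  have hk₁ : 0 < |‖k‖ - 1| := abs_pos.2 (sub_ne_zero.2 (by rcases hsep with h | h <;> linarith))
  have hgap := abs_sub_one_le_abs_sq_sub_sq (norm_nonneg k) (norm_nonneg q) hsep
  have hp₀ : p ≠ 0 := by
    rintro rfl
    obtain rfl : k = q := sub_eq_zero.1 (norm_eq_zero.1 (by simpa using hp.symm))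
    rcases hsep with h | h <;> linarith [h.1, h.2]
  have hp_lt : ‖p‖ < 8 := by linarith [norm_sub_le k q]
  have hcoeff : 10 * π * (1 + x ^ 3) ≤ 2570 * π * (1 + x ^ 3) / (1 + ‖q‖ ^ 4) := by
    have hq_pow : ‖q‖ ^ 4 ≤ 4 ^ 4 := by gcongr
    rw [le_div_iff₀ (by positivity)]
    nlinarith [show 0 ≤ π * (1 + x ^ 3) by positivity]
  rw [show originWeight (k - q) = ENNReal.ofReal (‖p‖ ^ (-(3 / 2) : ℝ)) by
      rw [hp]; exact indicator_of_mem (by simpa [← hp] using hp_lt) _,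
    show sphereWeight k = ENNReal.ofReal (|‖k‖ - 1| ^ (-(1 / 2) : ℝ)) from
      indicator_of_mem (by simpa using hk) _,
    ← ENNReal.ofReal_add (by positivity) (by positivity), ← ENNReal.ofReal_mul (by positivity)]
  refine (luneIntegral_le_of_norm_lt (by simp) hx (hk₁.trans_le hgap) hp₀ hp_lt).trans
    (ENNReal.ofReal_le_ofReal ?_)
  gcongr ?_ * (_ + ?_)
  exact Real.rpow_le_rpow_of_nonpos hk₁ hgap (by norm_num)

lemma luneIntegral_le_decay (hx : 0 ≤ x) (hsep : ‖q‖ < 1 ∧ 1 < ‖k‖ ∨ ‖k‖ < 1 ∧ 1 < ‖q‖)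
    (hfar : 4 ≤ ‖k‖ ∨ 4 ≤ ‖q‖) :
    luneIntegral x |‖k‖ ^ 2 - ‖q‖ ^ 2| p ≤
      ENNReal.ofReal (2570 * π * (1 + x ^ 3) / (1 + ‖q‖ ^ 4)) *
        ENNReal.ofReal ((1 + ‖k‖) ^ (-4 : ℝ)) := by
  set a := |‖k‖ ^ 2 - ‖q‖ ^ 2|
  have hgap : (1 + ‖k‖) ^ 2 * (1 + ‖q‖) ^ 2 ≤ 7 * a :=
    one_add_sq_mul_one_add_sq_le_abs_sq_sub_sq (norm_nonneg k) (norm_nonneg q) hsep hfar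
  have ha : 0 < a := by
    have : 0 < (1 + ‖k‖) ^ 2 * (1 + ‖q‖) ^ 2 := by positivity
    linarith
  have hdecay : 1 / a ^ 2 ≤ 49 / ((1 + ‖k‖) ^ 4 * (1 + ‖q‖ ^ 4)) := by
    rw [div_le_div_iff₀ (by positivity) (by positivity)]
    calc 1 * ((1 + ‖k‖) ^ 4 * (1 + ‖q‖ ^ 4)) ≤ (1 + ‖k‖) ^ 4 * (1 + ‖q‖) ^ 4 := by
          rw [one_mul]
          gcongr
          have := norm_nonneg q
          nlinarith [pow_nonneg this 2, pow_nonneg this 3]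
      _ = ((1 + ‖k‖) ^ 2 * (1 + ‖q‖) ^ 2) ^ 2 := by ring
      _ ≤ (7 * a) ^ 2 := by gcongr
      _ = 49 * a ^ 2 := by ring
  refine (luneIntegral_le_volume_ball ha x p).trans ?_
  rw [EuclideanSpace.volume_ball_fin_three, ← ENNReal.ofReal_pow hx,
    ← ENNReal.ofReal_mul (by positivity), ← ENNReal.ofReal_mul (by positivity),
    ← ENNReal.ofReal_mul (by positivity)]
  refine ENNReal.ofReal_le_ofReal ?_
  calc 1 / a ^ 2 * (x ^ 3 * (π * 4 / 3))
      ≤ 49 / ((1 + ‖k‖) ^ 4 * (1 + ‖q‖ ^ 4)) * ((1 + x ^ 3) * (π * (2570 / 49))) := by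
        gcongr
        · linarith
        · linarith [Real.pi_pos]
    _ = 2570 * π * (1 + x ^ 3) / (1 + ‖q‖ ^ 4) * (1 + ‖k‖) ^ (-4 : ℝ) := by
        rw [Real.rpow_neg (by positivity), show (4 : ℝ) = (4 : ℕ) by norm_num, Real.rpow_natCast]
        field_simp

lemma luneIntegral_le_majorant (hx : 0 ≤ x) (hp : ‖p‖ = ‖k - q‖)
    (hsep : ‖q‖ < 1 ∧ 1 < ‖k‖ ∨ ‖k‖ < 1 ∧ 1 < ‖q‖) :
    luneIntegral x |‖k‖ ^ 2 - ‖q‖ ^ 2| p ≤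
      ENNReal.ofReal (2570 * π * (1 + x ^ 3) / (1 + ‖q‖ ^ 4)) * majorant q k := by
  by_cases hfar : 4 ≤ ‖k‖ ∨ 4 ≤ ‖q‖
  · refine (luneIntegral_le_decay hx hsep hfar).trans ?_
    gcongr
    exact le_add_self
  · rw [not_or, not_le, not_le] at hfar
    refine (luneIntegral_le_weights hx hp hsep hfar.1 hfar.2).trans ?_
    gcongr
    exact le_self_add

end PointwiseBounds

lemma belyakovI2q_le_lintegral_majorant {x : ℝ} (hx : 0 ≤ x) (q : E3) :
    belyakovI2q x q ≤
      ENNReal.ofReal (5140 * π * (1 + x ^ 3) / (1 + ‖q‖ ^ 4)) * ∫⁻ k, majorant q k := by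
  set B := ENNReal.ofReal (2570 * π * (1 + x ^ 3) / (1 + ‖q‖ ^ 4)) with hB
  have hparticle (p : E3) (hp : ‖q‖ < 1 ∧ 1 < ‖q + p‖) :
      luneIntegral x (‖q + p‖ ^ 2 - ‖q‖ ^ 2) p ≤ B * majorant q (q + p) := by
    rw [← abs_of_pos (a := ‖q + p‖ ^ 2 - ‖q‖ ^ 2) (by nlinarith [norm_nonneg q])]
    exact luneIntegral_le_majorant hx (by simp) (.inl hp)
  have hhole (p : E3) (hp : ‖q - p‖ < 1 ∧ 1 < ‖q‖) :
      luneIntegral x (‖q‖ ^ 2 - ‖q - p‖ ^ 2) p ≤ B * majorant q (q - p) := by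
    rw [← abs_of_pos (a := ‖q‖ ^ 2 - ‖q - p‖ ^ 2) (by nlinarith [norm_nonneg (q - p)]),
      abs_sub_comm]
    exact luneIntegral_le_majorant hx (by simp) (.inr hp)
  calc belyakovI2q x q ≤ ∫⁻ p, (B * majorant q (q + p) + B * majorant q (q - p)) :=
        lintegral_mono fun p => add_le_add
          (indicator_apply_le' (hparticle p) fun _ => zero_le)
          (indicator_apply_le' (hhole p) fun _ => zero_le)
    _ = (B + B) * ∫⁻ k, majorant q k := by
        have hmaj := measurable_majorant q
        rw [lintegral_add_left (by fun_prop), lintegral_const_mul' _ _ ENNReal.ofReal_ne_top,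
          lintegral_const_mul' _ _ ENNReal.ofReal_ne_top, lintegral_add_left_eq_self (majorant q),
          lintegral_sub_left_eq_self (majorant q)]
        ring
    _ = ENNReal.ofReal (5140 * π * (1 + x ^ 3) / (1 + ‖q‖ ^ 4)) * ∫⁻ k, majorant q k := by
        rw [hB, ← ENNReal.ofReal_add (by positivity) (by positivity)]
        congr 2
        ring

theorem belyakovI2q_upper_bound_general :
    ∃ C : ℝ, 0 < C ∧ ∀ (x : ℝ) (q : E3), 0 ≤ x →
      belyakovI2q x q ≤ ENNReal.ofReal (C * (1 + x ^ 3) / (1 + ‖q‖ ^ 4)) := by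
  obtain ⟨M, hM, hmass⟩ := exists_lintegral_majorant_le
  refine ⟨5140 * π * M, by positivity, fun x q hx => ?_⟩
  calc belyakovI2q x q
      ≤ ENNReal.ofReal (5140 * π * (1 + x ^ 3) / (1 + ‖q‖ ^ 4)) * ENNReal.ofReal M :=
        (belyakovI2q_le_lintegral_majorant hx q).trans (by gcongr; exact hmass q)
    _ = ENNReal.ofReal (5140 * π * M * (1 + x ^ 3) / (1 + ‖q‖ ^ 4)) := by
        rw [← ENNReal.ofReal_mul (by positivity)]
        congr 1
        ring

lemma one_le_zpow_neg_two_add_pow_three {x : ℝ} (hx : 0 < x) : 1 ≤ x ^ (-2 : ℤ) + x ^ 3 := by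
  rcases le_total x 1 with h | h
  · linarith [one_le_zpow_of_nonpos₀ hx h (show (-2 : ℤ) ≤ 0 by norm_num), pow_pos hx 3]
  · linarith [one_le_pow₀ h (n := 3), zpow_pos hx (-2)]

/-- Upper bound `I₂^{(q)}(x) ≤ C (x⁻² + x³)/(1 + |q|⁴)` for all `x > 0` and `q ∈ ℝ³`. -/
theorem belyakovI2q_upper_bound :
    ∃ C : ℝ, 0 < C ∧ ∀ (x : ℝ) (q : E3), 0 < x →
      belyakovI2q x q ≤ ENNReal.ofReal (C * (x ^ (-2 : ℤ) + x ^ 3) / (1 + ‖q‖ ^ 4)) := by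
  obtain ⟨C, hC, hbound⟩ := belyakovI2q_upper_bound_general
  refine ⟨2 * C, by positivity, fun x q hx => (hbound x q hx.le).trans ?_⟩
  gcongr ENNReal.ofReal (?_ / _)
  nlinarith [one_le_zpow_neg_two_add_pow_three hx, zpow_pos hx (-2)]
end

section
/- Let a > 0 and k, k' > 0, and let G : ℝ³ → [0,∞) be a bounded measurable function. Define n^{Bel}(G) := (a²/π⁴) ∫_{ℝ³} dp ∫_{|r|<k<|r+p|} dr ∫_{|r'|<k'<|r'−p|} dr' (G(r+p) + G(−r)) · (|r+p|² − |r|² + |r'−p|² − |r'|²)^{−2}. Then there exist constants c, C > 0, depending only on the ratio k'/k, such that c a² k⁵ ∫_{ℝ³} G(k p)/(1 + |p|⁴) dp ≤ n^{Bel}(G) ≤ C a² k⁵ ∫_{ℝ³} G(k p)/(1 + |p|⁴) dp. -/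
open MeasureTheory Real
open scoped ENNReal

/-!
In the variables `q = r + p` and `r`, and after scaling `k` to `1`, the density is the integral of
`G q + G (-r)` over `‖r‖ < 1 < ‖q‖` against a kernel given by the `r'`-integral. By Tonelli it is
the integral of `G` against the marginals of this kernel, and both marginals are comparable to
`1 / (1 + ‖·‖⁴)`.

For large `q` the kernel itself is comparable to `‖q‖⁻⁴`, uniformly in `r`. For bounded `q` the
upper bound has to survive the vanishing of the denominator. The slices orthogonal to `p` of the
domain of `r'` have area at most `π` times the energy gap `γ` of `r'`, and `γ` is affine in the
height of the slice, as in Archimedes' hat-box theorem. Since `γ / (e + γ)² ≤ e^(-1/4) γ^(-3/4)`,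
where `e = ‖q‖² - ‖r‖²`, the kernel is at most a constant times
`‖p‖^(-3/4) e^(-1/4) ≤ ‖p‖^(-3/2) + e^(-1/2)`. Both singularities are integrable: the first at a
point, the second across the unit sphere.
-/

section
open Metric Module Set
open scoped NNReal InnerProductSpace

section MeasureSpace
variable {α : Type*} [MeasurableSpace α] {μ : Measure α}

theorem lintegral_lintegral_add_mul {β : Type*} [MeasurableSpace β] {ν : Measure β} [SFinite μ]
    [SFinite ν] {f : α → ℝ≥0∞} {g : β → ℝ≥0∞} {K : α → β → ℝ≥0∞}
    (hf : Measurable f) (hg : Measurable g) (hK : Measurable (Function.uncurry K)) :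
    ∫⁻ x, ∫⁻ y, (f x + g y) * K x y ∂ν ∂μ =
      (∫⁻ x, f x * ∫⁻ y, K x y ∂ν ∂μ) + ∫⁻ y, g y * ∫⁻ x, K x y ∂μ ∂ν := by
  have hswap : ∫⁻ x, ∫⁻ y, g y * K x y ∂ν ∂μ = ∫⁻ y, g y * ∫⁻ x, K x y ∂μ ∂ν := by
    rw [lintegral_lintegral_swap ((hg.comp measurable_snd).mul hK).aemeasurable]
    exact lintegral_congr fun y ↦ lintegral_const_mul _ hK.of_uncurry_right
  have hinner : Measurable fun x ↦ ∫⁻ y, K x y ∂ν := hK.lintegral_prod_right'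
  rw [← hswap, ← lintegral_add_left (f := fun x ↦ f x * ∫⁻ y, K x y ∂ν) (hf.mul hinner)]
  refine lintegral_congr fun x ↦ ?_
  rw [← lintegral_const_mul _ hK.of_uncurry_left,
    ← lintegral_add_left (hK.of_uncurry_left.const_mul (f x))]
  exact lintegral_congr fun y ↦ add_mul _ _ _

theorem setLIntegral_mul_le_const_mul {s : Set α} (hs : MeasurableSet s) {C : ℝ≥0}
    (f : α → ℝ≥0∞) {v w : α → ℝ≥0∞} (hvw : ∀ x ∈ s, v x ≤ C * w x) :
    ∫⁻ x in s, f x * v x ∂μ ≤ C * ∫⁻ x in s, f x * w x ∂μ := by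
  rw [← lintegral_const_mul' _ _ ENNReal.coe_ne_top]
  refine setLIntegral_mono' hs fun x hx ↦ ?_
  rw [mul_left_comm]
  gcongr
  exact hvw x hx

theorem const_mul_setLIntegral_mul_le {s : Set α} (hs : MeasurableSet s) {c : ℝ≥0}
    (f : α → ℝ≥0∞) {v w : α → ℝ≥0∞} (hvw : ∀ x ∈ s, c * w x ≤ v x) :
    c * ∫⁻ x in s, f x * w x ∂μ ≤ ∫⁻ x in s, f x * v x ∂μ := by
  rw [← lintegral_const_mul' _ _ ENNReal.coe_ne_top]
  refine setLIntegral_mono' hs fun x hx ↦ ?_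
  rw [mul_left_comm]
  gcongr
  exact hvw x hx

end MeasureSpace

section NormedSpace
variable {E : Type*} [NormedAddCommGroup E] [NormedSpace ℝ E] [FiniteDimensional ℝ E]
  [MeasurableSpace E] [BorelSpace E] (μ : Measure E) [μ.IsAddHaarMeasure]

theorem lintegral_eq_pow_finrank_mul_lintegral_comp_smul {k : ℝ} (hk : 0 < k) (f : E → ℝ≥0∞) :
    ∫⁻ x, f x ∂μ = ENNReal.ofReal (k ^ finrank ℝ E) * ∫⁻ x, f (k • x) ∂μ := by
  have hpow : 0 < k ^ finrank ℝ E := by positivity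
  have hmap : ∫⁻ x, f (k • x) ∂μ = ∫⁻ x, f x ∂(μ.map (k • ·)) :=
    ((Homeomorph.smulOfNeZero k hk.ne' (α := E)).measurableEmbedding.lintegral_map f).symm
  rw [hmap, Measure.map_addHaar_smul μ hk.ne', lintegral_smul_measure, smul_eq_mul, ← mul_assoc,
    ← ENNReal.ofReal_mul hpow.le, abs_of_pos (inv_pos.2 hpow), mul_inv_cancel₀ hpow.ne',
    ENNReal.ofReal_one, one_mul]

theorem setLIntegral_eq_pow_finrank_mul_setLIntegral_comp_smul {k : ℝ} (hk : 0 < k)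
    {s : Set E} (hs : MeasurableSet s) (f : E → ℝ≥0∞) :
    ∫⁻ x in s, f x ∂μ =
      ENNReal.ofReal (k ^ finrank ℝ E) * ∫⁻ x in (k • ·) ⁻¹' s, f (k • x) ∂μ := by
  rw [← lintegral_indicator hs, lintegral_eq_pow_finrank_mul_lintegral_comp_smul μ hk,
    ← lintegral_indicator (hs.preimage (measurable_const_smul k))]
  rfl

theorem exists_setLIntegral_ball_rpow_norm_sub_le {γ : ℝ} (hγ₀ : 0 ≤ γ) (hγ : γ < finrank ℝ E)
    (R : ℝ) :
    ∃ C : ℝ≥0, ∀ q : E, ∫⁻ z in ball 0 R, ENNReal.ofReal (‖z - q‖ ^ (-γ)) ∂μ ≤ C := by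
  set singular : E → ℝ≥0∞ := (ball 0 1).indicator fun z ↦ ENNReal.ofReal (‖z‖ ^ (-γ))
  have hfinrank : 1 ≤ finrank ℝ E := by
    have : (0 : ℝ) < finrank ℝ E := hγ₀.trans_lt hγ
    exact_mod_cast this
  have hint : IntegrableOn (fun z : E ↦ ‖z‖ ^ (-γ)) (ball 0 1) μ :=
    integrableOn_ball_of_norm_le_rpow hfinrank hγ (C := 1)
      (by filter_upwards with z; simp [abs_of_nonneg (rpow_nonneg (norm_nonneg z) _)])
      (Measurable.aestronglyMeasurable (by fun_prop))
  have hle (z : E) : ENNReal.ofReal (‖z‖ ^ (-γ)) ≤ 1 + singular z := by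
    by_cases hz : z ∈ ball (0 : E) 1
    · simp [singular, indicator_of_mem hz]
    · have : ‖z‖ ^ (-γ) ≤ 1 :=
        rpow_le_one_of_one_le_of_nonpos (by simpa using hz) (neg_nonpos.2 hγ₀)
      exact le_add_right (ENNReal.ofReal_le_one.2 this)
  have hfin : μ (ball 0 R) + ∫⁻ z, singular z ∂μ ≠ ∞ := by
    rw [lintegral_indicator measurableSet_ball]
    exact ENNReal.add_ne_top.2 ⟨measure_ball_lt_top.ne, hint.lintegral_lt_top.ne⟩
  refine ⟨(μ (ball 0 R) + ∫⁻ z, singular z ∂μ).toNNReal, fun q ↦ ?_⟩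
  calc ∫⁻ z in ball 0 R, ENNReal.ofReal (‖z - q‖ ^ (-γ)) ∂μ
      ≤ ∫⁻ z in ball 0 R, (1 + singular (z - q)) ∂μ := lintegral_mono fun z ↦ hle (z - q)
    _ = μ (ball 0 R) + ∫⁻ z in ball 0 R, singular (z - q) ∂μ := by
      rw [lintegral_add_left measurable_const]; simp
    _ ≤ μ (ball 0 R) + ∫⁻ z, singular (z - q) ∂μ := by
      gcongr; exact Measure.restrict_le_self
    _ = _ := by rw [lintegral_sub_right_eq_self singular q, ENNReal.coe_toNNReal hfin]

theorem integrableOn_ball_rpow_abs_norm_sub {γ : ℝ} (hγ₀ : 0 ≤ γ) (hγ : γ < 1) [Nontrivial E]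
    (a R : ℝ) :
    IntegrableOn (fun x : E ↦ |‖x‖ - a| ^ (-γ)) (ball 0 R) μ := by
  have hline : IntegrableOn (fun y : ℝ ↦ |y - a| ^ (-γ)) (Icc 0 R) := by
    obtain ⟨C, hC⟩ := exists_setLIntegral_ball_rpow_norm_sub_le (volume : Measure ℝ) hγ₀
      (by simpa using hγ) (R + 1)
    refine IntegrableOn.mono_set (t := ball 0 (R + 1)) ⟨?_, ?_⟩ fun y hy ↦ ?_
    · exact Measurable.aestronglyMeasurable (by fun_prop)
    · rw [hasFiniteIntegral_iff_ofReal (.of_forall fun y ↦ by positivity)]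
      exact (hC a).trans_lt ENNReal.coe_lt_top
    · rw [mem_ball_zero_iff, norm_of_nonneg hy.1]
      linarith [hy.2]
  refine (integrableOn_fun_norm_addHaar μ (f := fun y : ℝ ↦ |y - a| ^ (-γ))).2 ?_
  exact (hline.continuousOn_mul (by fun_prop) isCompact_Icc).mono_set Ioo_subset_Icc_self
theorem lintegral_compl_closedBall_add_ball_neg [Nontrivial E] (R : ℝ) (f : E → ℝ≥0∞) :
    (∫⁻ q in (closedBall 0 R)ᶜ, f q ∂μ) + ∫⁻ r in ball 0 R, f (-r) ∂μ = ∫⁻ x, f x ∂μ := by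
  have hneg : ∫⁻ r in ball 0 R, f (-r) ∂μ = ∫⁻ r in closedBall 0 R, f r ∂μ := by
    rw [← Measure.restrict_congr_set (ae_eq_of_subset_of_measure_ge ball_subset_closedBall
      (Measure.addHaar_closedBall_eq_addHaar_ball μ (0 : E) R).le
        measurableSet_ball.nullMeasurableSet measure_closedBall_lt_top.ne),
      ← lintegral_indicator measurableSet_ball, ← lintegral_indicator measurableSet_ball,
      ← lintegral_neg_eq_self]
    simp [indicator]
  rw [hneg, add_comm, lintegral_add_compl f measurableSet_closedBall]

end NormedSpace

section InnerProductSpace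
variable {E : Type*} [NormedAddCommGroup E] [InnerProductSpace ℝ E] [FiniteDimensional ℝ E]
  [MeasurableSpace E] [BorelSpace E]

theorem lintegral_eq_lintegral_smul_add_orthogonal_s10 {u : E} (hu : ‖u‖ = 1) {f : E → ℝ≥0∞}
    (hf : Measurable f) :
    ∫⁻ x, f x = ∫⁻ σ : ℝ, ∫⁻ w : (ℝ ∙ u)ᗮ, f (σ • u + w) := by
  let e : ℝ × (ℝ ∙ u)ᗮ → E := fun x ↦ (ℝ ∙ u).orthogonalDecomposition.symm
    (WithLp.toLp 2 (LinearIsometryEquiv.toSpanUnitSingleton u hu x.1, x.2))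
  have he : MeasurePreserving e :=
    ((ℝ ∙ u).orthogonalDecomposition.symm.measurePreserving.comp
      (WithLp.volume_preserving_toLp _ _)).comp
      ((LinearIsometryEquiv.toSpanUnitSingleton (𝕜 := ℝ) u hu).measurePreserving.prod (.id volume))
  calc ∫⁻ x, f x = ∫⁻ x, (f ∘ e) x := (he.lintegral_comp hf).symm
    _ = ∫⁻ σ : ℝ, ∫⁻ w : (ℝ ∙ u)ᗮ, f (σ • u + w) :=
      lintegral_prod _ (hf.comp he.measurable).aemeasurable

theorem volume_setOf_lt_sq_norm_lt_le (hE : finrank ℝ E = 2) (a b : ℝ) :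
    volume {w : E | b < ‖w‖ ^ 2 ∧ ‖w‖ ^ 2 < a} ≤ ENNReal.ofReal π * ENNReal.ofReal (a - b) := by
  have : Nontrivial E := nontrivial_of_finrank_pos (R := ℝ) (by omega)
  have hball (R : ℝ) : volume (ball (0 : E) (√R)) = ENNReal.ofReal π * ENNReal.ofReal R := by
    rw [InnerProductSpace.volume_ball_of_dim_even (k := 1) (by omega), hE,
      ← ENNReal.ofReal_pow (sqrt_nonneg _), mul_comm]
    rcases le_total 0 R with hR | hR
    · simp [sq_sqrt hR]
    · simp [sqrt_eq_zero_of_nonpos hR, ENNReal.ofReal_of_nonpos hR]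
  have hmem (R : ℝ) (w : E) : w ∈ ball 0 (√R) ↔ ‖w‖ ^ 2 < R := by
    rw [mem_ball_zero_iff, lt_sqrt (norm_nonneg w)]
  have hsub : {w : E | b < ‖w‖ ^ 2 ∧ ‖w‖ ^ 2 < a} ⊆ ball 0 (√a) \ ball 0 (√b) :=
    fun w hw ↦ ⟨(hmem a w).2 hw.2, fun h ↦ hw.1.not_gt ((hmem b w).1 h)⟩
  rcases lt_or_ge a b with hab | hab
  · have hempty : {w : E | b < ‖w‖ ^ 2 ∧ ‖w‖ ^ 2 < a} = ∅ :=
      eq_empty_of_forall_notMem fun w hw ↦ (hw.1.trans hw.2).not_gt hab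
    simp [hempty]
  calc volume {w : E | b < ‖w‖ ^ 2 ∧ ‖w‖ ^ 2 < a}
      ≤ volume (ball (0 : E) (√a) \ ball 0 (√b)) := measure_mono hsub
    _ = ENNReal.ofReal π * ENNReal.ofReal a - ENNReal.ofReal π * ENNReal.ofReal b := by
      rw [measure_sdiff (ball_subset_ball (sqrt_le_sqrt hab))
        measurableSet_ball.nullMeasurableSet measure_ball_lt_top.ne, hball, hball]
    _ ≤ _ := by
      rw [← ENNReal.mul_sub (by simp)]
      gcongr
      rw [tsub_le_iff_right]
      simpa using ENNReal.ofReal_add_le (p := a - b) (q := b)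

end InnerProductSpace

section Lens
variable {E : Type*} [NormedAddCommGroup E]

/-- The energy `‖r + p‖² - ‖r‖²` needed to excite a free fermion of momentum `r` by a momentum
transfer `p`. -/
def kineticGap (p r : E) : ℝ := ‖r + p‖ ^ 2 - ‖r‖ ^ 2

/-- The momenta inside the Fermi ball of radius `k` which a momentum transfer `p` moves out of it.
Since `r' - p = r' + -p`, the domain of `r'` in the Belyakov density is `excitationSet k' (-p)`. -/
def excitationSet (k : ℝ) (p : E) : Set E := {r | ‖r‖ < k ∧ k < ‖r + p‖}

theorem kineticGap_pos_of_mem_excitationSet {k : ℝ} {p r : E} (hr : r ∈ excitationSet k p) :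
    0 < kineticGap p r :=
  sub_pos.2 (pow_lt_pow_left₀ (hr.1.trans hr.2) (norm_nonneg r) two_ne_zero)

theorem excitationSet_subset_ball (k : ℝ) (p : E) : excitationSet k p ⊆ ball 0 k :=
  fun _ hr ↦ mem_ball_zero_iff.2 hr.1

theorem ne_zero_of_mem_excitationSet {k : ℝ} {p r : E} (hr : r ∈ excitationSet k p) : p ≠ 0 := by
  rintro rfl
  exact (hr.1.trans (by simpa using hr.2)).false

theorem ball_subset_excitationSet [NormedSpace ℝ E] {t d : ℝ} (hd : 0 < d) (hdt : d ≤ t) {p : E}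
    (hdp : 2 * d ≤ ‖p‖) :
    ball (((t - d) / ‖p‖) • p) d ⊆ excitationSet t p := by
  intro s hs
  have hp : 0 < ‖p‖ := by linarith
  rw [mem_ball, dist_eq_norm] at hs
  have hcenter : ‖((t - d) / ‖p‖) • p‖ = t - d := by
    rw [norm_smul, norm_of_nonneg (div_nonneg (sub_nonneg.2 hdt) hp.le), div_mul_cancel₀ _ hp.ne']
  have hshift : ‖((t - d) / ‖p‖) • p + p‖ = t - d + ‖p‖ := by
    have : 0 ≤ (t - d) / ‖p‖ := div_nonneg (sub_nonneg.2 hdt) hp.le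
    rw [show ((t - d) / ‖p‖) • p + p = ((t - d) / ‖p‖ + 1) • p by module, norm_smul,
      norm_of_nonneg (by linarith)]
    field_simp
  refine ⟨?_, ?_⟩
  · linarith [norm_le_norm_add_norm_sub' s (((t - d) / ‖p‖) • p)]
  · have := norm_le_norm_add_norm_sub' (((t - d) / ‖p‖) • p + p) (s + p)
    rw [add_sub_add_right_eq_sub, norm_sub_rev] at this
    linarith

theorem measurable_kineticGap [MeasurableSpace E] [BorelSpace E] (p : E) :
    Measurable (kineticGap p) := by
  unfold kineticGap
  fun_prop

theorem measurableSet_excitationSet [MeasurableSpace E] [BorelSpace E] (k : ℝ) (p : E) :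
    MeasurableSet (excitationSet k p) := by
  unfold excitationSet
  measurability

variable [InnerProductSpace ℝ E]

theorem sq_norm_smul_add_orthogonal {u : E} (hu : ‖u‖ = 1) (σ : ℝ) (w : (ℝ ∙ u)ᗮ) :
    ‖σ • u + (w : E)‖ ^ 2 = σ ^ 2 + ‖w‖ ^ 2 := by
  rw [norm_add_sq_real, inner_smul_left,
    Submodule.mem_orthogonal_singleton_iff_inner_right.1 w.2, norm_smul, hu]
  simp

theorem kineticGap_smul_smul_add_orthogonal {u : E} (hu : ‖u‖ = 1) (ρ σ : ℝ) (w : (ℝ ∙ u)ᗮ) :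
    kineticGap (ρ • u) (σ • u + w) = ρ ^ 2 + 2 * ρ * σ := by
  have : σ • u + (w : E) + ρ • u = (σ + ρ) • u + w := by module
  rw [kineticGap, this, sq_norm_smul_add_orthogonal hu, sq_norm_smul_add_orthogonal hu]
  ring

theorem mem_ball_of_smul_add_orthogonal_mem_excitationSet {u p : E} (hu : ‖u‖ = 1) {t σ : ℝ}
    {w : (ℝ ∙ u)ᗮ} (h : σ • u + (w : E) ∈ excitationSet t p) : σ ∈ ball (0 : ℝ) t := by
  have hσ : σ ^ 2 ≤ ‖σ • u + (w : E)‖ ^ 2 := by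
    rw [sq_norm_smul_add_orthogonal hu]
    linarith [sq_nonneg ‖w‖]
  exact mem_ball_zero_iff.2 ((abs_le_of_sq_le_sq hσ (norm_nonneg _)).trans_lt h.1)

variable [FiniteDimensional ℝ E] [MeasurableSpace E] [BorelSpace E]

theorem volume_slice_excitationSet_le (hE : finrank ℝ E = 3) {u : E} (hu : ‖u‖ = 1) (t ρ σ : ℝ) :
    volume {w : (ℝ ∙ u)ᗮ | σ • u + (w : E) ∈ excitationSet t (ρ • u)} ≤
      ENNReal.ofReal π * ENNReal.ofReal (ρ ^ 2 + 2 * ρ * σ) := by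
  have : Fact (finrank ℝ E = 2 + 1) := ⟨hE⟩
  have hrank : finrank ℝ (ℝ ∙ u)ᗮ = 2 :=
    Submodule.finrank_orthogonal_span_singleton (norm_ne_zero_iff.1 (hu.trans_ne one_ne_zero))
  have harea := volume_setOf_lt_sq_norm_lt_le hrank (t ^ 2 - σ ^ 2)
    (t ^ 2 - σ ^ 2 - (ρ ^ 2 + 2 * ρ * σ))
  rw [sub_sub_cancel] at harea
  refine (measure_mono fun w hw ↦ ?_).trans harea
  have ht : 0 < t := (norm_nonneg _).trans_lt hw.1
  have hin : ‖σ • u + (w : E)‖ ^ 2 < t ^ 2 := pow_lt_pow_left₀ hw.1 (norm_nonneg _) two_ne_zero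
  have hout : t ^ 2 < ‖σ • u + (w : E) + ρ • u‖ ^ 2 := pow_lt_pow_left₀ hw.2 ht.le two_ne_zero
  have hgap := kineticGap_smul_smul_add_orthogonal hu ρ σ w
  rw [kineticGap] at hgap
  rw [sq_norm_smul_add_orthogonal hu] at hin hgap
  exact ⟨by linarith, by linarith⟩

theorem lintegral_slice_excitationSet_comp_kineticGap_le (hE : finrank ℝ E = 3) {u : E}
    (hu : ‖u‖ = 1) (t ρ σ : ℝ) (φ : ℝ → ℝ≥0∞) :
    ∫⁻ w : (ℝ ∙ u)ᗮ,
        (excitationSet t (ρ • u)).indicator (fun s ↦ φ (kineticGap (ρ • u) s)) (σ • u + w) ≤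
      (ball 0 t).indicator (fun σ ↦ ENNReal.ofReal π *
        (ENNReal.ofReal (ρ ^ 2 + 2 * ρ * σ) * φ (ρ ^ 2 + 2 * ρ * σ))) σ := by
  by_cases hσ : σ ∈ ball (0 : ℝ) t
  · set slice : Set (ℝ ∙ u)ᗮ := {w | σ • u + (w : E) ∈ excitationSet t (ρ • u)}
    calc _ = ∫⁻ w, slice.indicator (fun _ ↦ φ (ρ ^ 2 + 2 * ρ * σ)) w := by
          simp only [indicator, kineticGap_smul_smul_add_orthogonal hu, slice, mem_ofPred_eq]
      _ ≤ φ (ρ ^ 2 + 2 * ρ * σ) * volume slice := lintegral_indicator_const_le _ _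
      _ ≤ φ (ρ ^ 2 + 2 * ρ * σ) *
            (ENNReal.ofReal π * ENNReal.ofReal (ρ ^ 2 + 2 * ρ * σ)) := by
          gcongr
          exact volume_slice_excitationSet_le hE hu t ρ σ
      _ = _ := by rw [indicator_of_mem hσ]; ring
  · have hempty (w : (ℝ ∙ u)ᗮ) : σ • u + (w : E) ∉ excitationSet t (ρ • u) :=
      fun h ↦ hσ (mem_ball_of_smul_add_orthogonal_mem_excitationSet hu h)
    simp [hempty]

theorem setLIntegral_excitationSet_comp_kineticGap_le (hE : finrank ℝ E = 3) (t : ℝ) (p : E)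
    {φ : ℝ → ℝ≥0∞} (hφ : Measurable φ) :
    ∫⁻ s in excitationSet t p, φ (kineticGap p s) ≤
      ENNReal.ofReal π * ∫⁻ σ in ball (0 : ℝ) t,
        ENNReal.ofReal (‖p‖ ^ 2 + 2 * ‖p‖ * σ) * φ (‖p‖ ^ 2 + 2 * ‖p‖ * σ) := by
  rcases eq_or_ne p 0 with rfl | hp
  · have hempty : excitationSet t (0 : E) = ∅ :=
      eq_empty_of_forall_notMem fun r hr ↦ ne_zero_of_mem_excitationSet hr rfl
    simp [hempty]
  obtain ⟨u, hu, hpu⟩ : ∃ u : E, ‖u‖ = 1 ∧ ‖p‖ • u = p :=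
    ⟨‖p‖⁻¹ • p, norm_smul_inv_norm hp, smul_inv_smul₀ (norm_ne_zero_iff.2 hp) p⟩
  calc ∫⁻ s in excitationSet t p, φ (kineticGap p s)
      = ∫⁻ σ : ℝ, ∫⁻ w : (ℝ ∙ u)ᗮ,
          (excitationSet t p).indicator (fun s ↦ φ (kineticGap p s)) (σ • u + w) := by
        rw [← lintegral_indicator (measurableSet_excitationSet t p)]
        exact lintegral_eq_lintegral_smul_add_orthogonal_s10 hu
          ((hφ.comp (measurable_kineticGap p)).indicator (measurableSet_excitationSet t p))
    _ ≤ ∫⁻ σ in ball (0 : ℝ) t, ENNReal.ofReal π *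
          (ENNReal.ofReal (‖p‖ ^ 2 + 2 * ‖p‖ * σ) * φ (‖p‖ ^ 2 + 2 * ‖p‖ * σ)) := by
        rw [← lintegral_indicator measurableSet_ball]
        refine lintegral_mono fun σ ↦ ?_
        simpa only [hpu] using
          lintegral_slice_excitationSet_comp_kineticGap_le hE hu t ‖p‖ σ φ
    _ = _ := lintegral_const_mul _ (by fun_prop)

end Lens

section Kernel

theorem div_sq_add_le_rpow_mul_rpow {x θ : ℝ} (hx : 0 < x) (hθ₀ : 0 ≤ θ) (hθ₂ : θ ≤ 2) (y : ℝ) :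
    y / (x + y) ^ 2 ≤ x ^ (-θ) * |y| ^ (θ - 1) := by
  rcases le_or_gt y 0 with hy | hy
  · exact (div_nonpos_of_nonpos_of_nonneg hy (sq_nonneg _)).trans (by positivity)
  have hkey : x ^ θ * y ^ (2 - θ) ≤ (x + y) ^ 2 :=
    calc x ^ θ * y ^ (2 - θ) ≤ (x + y) ^ θ * (x + y) ^ (2 - θ) := by
          gcongr <;> linarith
      _ = (x + y) ^ 2 := by
          rw [← rpow_add (by positivity), add_sub_cancel, rpow_two]
  calc y / (x + y) ^ 2 ≤ y / (x ^ θ * y ^ (2 - θ)) := by gcongr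
    _ = x ^ (-θ) * |y| ^ (θ - 1) := by
      rw [abs_of_pos hy, rpow_neg hx.le, show θ - 1 = 1 - (2 - θ) by ring, rpow_sub hy 1, rpow_one]
      field_simp

theorem exists_setLIntegral_ball_affine_gap_le (t : ℝ) :
    ∃ C : ℝ≥0, ∀ ρ e : ℝ, 0 ≤ ρ → 0 < e →
      ∫⁻ σ in ball (0 : ℝ) t, ENNReal.ofReal (ρ ^ 2 + 2 * ρ * σ) *
          ENNReal.ofReal (1 / (e + (ρ ^ 2 + 2 * ρ * σ)) ^ 2) ≤
        C * ENNReal.ofReal (ρ ^ (-(3 / 4) : ℝ) * e ^ (-(1 / 4) : ℝ)) := by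
  obtain ⟨C, hC⟩ := exists_setLIntegral_ball_rpow_norm_sub_le (volume : Measure ℝ)
    (γ := 3 / 4) (by norm_num) (by norm_num) t
  refine ⟨C, fun ρ e hρ he ↦ ?_⟩
  have htwo : (2 : ℝ) ^ (-(3 / 4) : ℝ) ≤ 1 :=
    rpow_le_one_of_one_le_of_nonpos (by norm_num) (by norm_num)
  have hpointwise (σ : ℝ) : (ρ ^ 2 + 2 * ρ * σ) * (1 / (e + (ρ ^ 2 + 2 * ρ * σ)) ^ 2) ≤
      ‖σ - -ρ / 2‖ ^ (-(3 / 4) : ℝ) * (ρ ^ (-(3 / 4) : ℝ) * e ^ (-(1 / 4) : ℝ)) := by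
    have hgap : |ρ ^ 2 + 2 * ρ * σ| = 2 * (ρ * ‖σ - -ρ / 2‖) := by
      rw [norm_eq_abs, show ρ ^ 2 + 2 * ρ * σ = 2 * (ρ * (σ - -ρ / 2)) by ring, abs_mul, abs_mul,
        abs_two, abs_of_nonneg hρ]
    calc (ρ ^ 2 + 2 * ρ * σ) * (1 / (e + (ρ ^ 2 + 2 * ρ * σ)) ^ 2)
        ≤ e ^ (-(1 / 4) : ℝ) * |ρ ^ 2 + 2 * ρ * σ| ^ (1 / 4 - 1 : ℝ) := by
          rw [mul_one_div]
          exact div_sq_add_le_rpow_mul_rpow he (by norm_num) (by norm_num) _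
      _ = 2 ^ (-(3 / 4) : ℝ) *
          (‖σ - -ρ / 2‖ ^ (-(3 / 4) : ℝ) * (ρ ^ (-(3 / 4) : ℝ) * e ^ (-(1 / 4) : ℝ))) := by
          rw [hgap, show (1 / 4 - 1 : ℝ) = -(3 / 4) by norm_num, mul_rpow (by norm_num)
            (by positivity), mul_rpow hρ (by positivity)]
          ring
      _ ≤ _ := mul_le_of_le_one_left (by positivity) htwo
  calc _ ≤ ∫⁻ σ in ball (0 : ℝ) t, ENNReal.ofReal (‖σ - -ρ / 2‖ ^ (-(3 / 4) : ℝ)) *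
          ENNReal.ofReal (ρ ^ (-(3 / 4) : ℝ) * e ^ (-(1 / 4) : ℝ)) := by
        refine lintegral_mono fun σ ↦ ?_
        rw [← ENNReal.ofReal_mul' (by positivity), ← ENNReal.ofReal_mul (by positivity)]
        exact ENNReal.ofReal_le_ofReal (hpointwise σ)
    _ ≤ _ := by
        rw [lintegral_mul_const' _ _ ENNReal.ofReal_ne_top]
        gcongr
        exact hC _

theorem rpow_mul_rpow_le_add {ρ e : ℝ} (hρ : 0 ≤ ρ) (he : 0 ≤ e) :
    ρ ^ (-(3 / 4) : ℝ) * e ^ (-(1 / 4) : ℝ) ≤ ρ ^ (-(3 / 2) : ℝ) + e ^ (-(1 / 2) : ℝ) := by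
  have hρ_sq : (ρ ^ (-(3 / 4) : ℝ)) ^ 2 = ρ ^ (-(3 / 2) : ℝ) := by
    rw [← rpow_mul_natCast hρ]; norm_num
  have he_sq : (e ^ (-(1 / 4) : ℝ)) ^ 2 = e ^ (-(1 / 2) : ℝ) := by
    rw [← rpow_mul_natCast he]; norm_num
  have hamgm := two_mul_le_add_sq (ρ ^ (-(3 / 4) : ℝ)) (e ^ (-(1 / 4) : ℝ))
  rw [hρ_sq, he_sq] at hamgm
  have : 0 ≤ ρ ^ (-(3 / 4) : ℝ) * e ^ (-(1 / 4) : ℝ) := by positivity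
  linarith

variable {E : Type*} [NormedAddCommGroup E] [InnerProductSpace ℝ E] [FiniteDimensional ℝ E]
  [MeasurableSpace E] [BorelSpace E]

/-- The inner integral, over `r'`, of the Belyakov density, as a function of the momentum transfer
`p` and of the energy `e` of the other excited pair. -/
noncomputable def belyakovKernel (k : ℝ) (p : E) (e : ℝ) : ℝ≥0∞ :=
  ∫⁻ s in excitationSet k (-p), ENNReal.ofReal (1 / (e + kineticGap (-p) s) ^ 2)

theorem exists_belyakovKernel_le_rpow (hE : finrank ℝ E = 3) (t : ℝ) :
    ∃ C : ℝ≥0, ∀ (p : E) (e : ℝ), 0 < e → belyakovKernel t p e ≤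
      C * (ENNReal.ofReal (‖p‖ ^ (-(3 / 2) : ℝ)) + ENNReal.ofReal (e ^ (-(1 / 2) : ℝ))) := by
  obtain ⟨C, hC⟩ := exists_setLIntegral_ball_affine_gap_le t
  refine ⟨NNReal.pi * C, fun p e he ↦ ?_⟩
  have hlens := setLIntegral_excitationSet_comp_kineticGap_le hE t (-p)
    (φ := fun y ↦ ENNReal.ofReal (1 / (e + y) ^ 2)) (by fun_prop)
  rw [norm_neg, ← NNReal.coe_real_pi, ENNReal.ofReal_coe_nnreal] at hlens
  refine hlens.trans ?_
  rw [ENNReal.coe_mul, mul_assoc, ← ENNReal.ofReal_add (by positivity) (by positivity)]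
  gcongr
  refine (hC ‖p‖ e (norm_nonneg p) he).trans ?_
  gcongr
  exact rpow_mul_rpow_le_add (norm_nonneg p) he.le

theorem belyakovKernel_le_volume_ball_mul (t : ℝ) (p : E) {e : ℝ} (he : 0 < e) :
    belyakovKernel t p e ≤ volume (ball (0 : E) t) * ENNReal.ofReal (1 / e ^ 2) := by
  rw [mul_comm, ← setLIntegral_const]
  refine (setLIntegral_mono' (measurableSet_excitationSet t (-p)) fun s hs ↦ ?_).trans
    (lintegral_mono_set (excitationSet_subset_ball t (-p)))
  have := kineticGap_pos_of_mem_excitationSet hs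
  gcongr
  linarith

theorem volume_ball_mul_le_belyakovKernel {t d : ℝ} (hd : 0 < d) (hdt : d ≤ t) {p : E}
    (hdp : 2 * d ≤ ‖p‖) {e : ℝ} (he : 0 ≤ e) :
    volume (ball (0 : E) d) * ENNReal.ofReal (1 / (e + (t + ‖p‖) ^ 2) ^ 2) ≤
      belyakovKernel t p e := by
  rw [← norm_neg] at hdp ⊢
  rw [← Measure.addHaar_ball_center volume (((t - d) / ‖-p‖) • -p), mul_comm,
    ← setLIntegral_const]
  refine (lintegral_mono_set (ball_subset_excitationSet hd hdt hdp)).trans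
    (setLIntegral_mono' (measurableSet_excitationSet t (-p)) fun s hs ↦ ?_)
  have hpos := kineticGap_pos_of_mem_excitationSet hs
  have hle : kineticGap (-p) s ≤ (t + ‖-p‖) ^ 2 := by
    have : ‖s + -p‖ ≤ t + ‖-p‖ := (norm_add_le _ _).trans (by linarith [hs.1])
    unfold kineticGap
    nlinarith [norm_nonneg (s + -p), sq_nonneg ‖s‖]
  gcongr

end Kernel

section Weights
variable {E : Type*} [NormedAddCommGroup E]

/-- The weight `1 / (1 + ‖p‖⁴)` of the two-sided bound. -/
noncomputable def quarticWeight (p : E) : ℝ≥0∞ := ENNReal.ofReal (1 / (1 + ‖p‖ ^ 4))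

theorem quarticWeight_le_one (p : E) : quarticWeight p ≤ 1 :=
  ENNReal.ofReal_le_one.2 (div_le_one_of_le₀ (by linarith [pow_nonneg (norm_nonneg p) 4])
    (by positivity))

theorem one_le_mul_quarticWeight {p : E} {m : ℝ≥0} (hp : 1 + ‖p‖ ^ 4 ≤ m) :
    1 ≤ m * quarticWeight p := by
  rw [quarticWeight, ← ENNReal.ofReal_coe_nnreal, ← ENNReal.ofReal_mul m.coe_nonneg, mul_one_div]
  exact ENNReal.one_le_ofReal.2 ((one_le_div (by positivity)).2 hp)

variable [InnerProductSpace ℝ E] [FiniteDimensional ℝ E] [MeasurableSpace E] [BorelSpace E]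

theorem lintegral_quarticWeight_lt_top (hE : finrank ℝ E < 4) :
    ∫⁻ p : E, quarticWeight p < ∞ := by
  have hint : Integrable fun p : E ↦ 2 * (1 + ‖p‖ ^ 2) ^ (-4 / 2 : ℝ) :=
    (integrable_rpow_neg_one_add_norm_sq (by exact_mod_cast hE)).const_mul 2
  refine (lintegral_mono fun p ↦ ENNReal.ofReal_le_ofReal ?_).trans_lt hint.lintegral_lt_top
  rw [show (-4 / 2 : ℝ) = -(2 : ℕ) by norm_num, rpow_neg (by positivity), rpow_natCast,
    ← div_eq_mul_inv, div_le_div_iff₀ (by positivity) (by positivity)]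
  nlinarith [sq_nonneg (‖p‖ ^ 2 - 1)]

/-- The kernel of the Belyakov density as a function of the momenta `q` of the excited particle and
`r` of the hole it leaves, for which the momentum transfer is `q - r`. -/
noncomputable def particleHoleKernel (t : ℝ) (q r : E) : ℝ≥0∞ :=
  belyakovKernel t (q - r) (‖q‖ ^ 2 - ‖r‖ ^ 2)

/-- The total weight with which an excited particle of momentum `q` enters the Belyakov density,
for Fermi momenta `1` and `t`. -/
noncomputable def particleWeight (t : ℝ) (q : E) : ℝ≥0∞ :=
  ∫⁻ r in ball 0 1, particleHoleKernel t q r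

/-- The total weight with which a hole of momentum `r` enters the Belyakov density, for Fermi
momenta `1` and `t`. -/
noncomputable def holeWeight (t : ℝ) (r : E) : ℝ≥0∞ :=
  ∫⁻ q in (closedBall 0 1)ᶜ, particleHoleKernel t q r

theorem exists_particleHoleKernel_le_singular (hE : finrank ℝ E = 3) (t : ℝ) :
    ∃ C : ℝ≥0, ∀ (q r : E) (x : E), ‖r‖ < 1 → 1 < ‖q‖ → x = q ∨ x = r →
      particleHoleKernel t q r ≤ C * (ENNReal.ofReal (‖q - r‖ ^ (-(3 / 2) : ℝ)) +
        ENNReal.ofReal (|‖x‖ - 1| ^ (-(1 / 2) : ℝ))) := by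
  obtain ⟨C, hC⟩ := exists_belyakovKernel_le_rpow hE t
  refine ⟨C, fun q r x hr hq hx ↦ ?_⟩
  have hdist : 0 < |‖x‖ - 1| ∧ |‖x‖ - 1| ≤ ‖q‖ ^ 2 - ‖r‖ ^ 2 := by
    rcases hx with rfl | rfl
    · rw [abs_of_pos (by linarith)]
      constructor <;> nlinarith [norm_nonneg r]
    · rw [abs_of_neg (by linarith)]
      constructor <;> nlinarith [norm_nonneg x]
  refine (hC (q - r) _ (hdist.1.trans_le hdist.2)).trans ?_
  gcongr C * (_ + ENNReal.ofReal ?_)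
  exact rpow_le_rpow_of_nonpos hdist.1 hdist.2 (by norm_num)

theorem exists_setLIntegral_ball_singular_le (hE : finrank ℝ E = 3) :
    ∃ C : ℝ≥0, ∀ p : E, ∫⁻ x in ball 0 2, (ENNReal.ofReal (‖x - p‖ ^ (-(3 / 2) : ℝ)) +
      ENNReal.ofReal (|‖x‖ - 1| ^ (-(1 / 2) : ℝ))) ≤ C := by
  have : Nontrivial E := nontrivial_of_finrank_pos (R := ℝ) (by omega)
  obtain ⟨C₁, hC₁⟩ := exists_setLIntegral_ball_rpow_norm_sub_le (volume : Measure E)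
    (γ := 3 / 2) (by norm_num) (by rw [hE]; norm_num) 2
  have hsphere := (integrableOn_ball_rpow_abs_norm_sub (volume : Measure E) (γ := 1 / 2)
    (by norm_num) (by norm_num) 1 2).lintegral_lt_top
  obtain ⟨C₂, hC₂⟩ : ∃ C₂ : ℝ≥0,
      C₂ = ∫⁻ x in ball (0 : E) 2, ENNReal.ofReal (|‖x‖ - 1| ^ (-(1 / 2) : ℝ)) :=
    ⟨_, ENNReal.coe_toNNReal hsphere.ne⟩
  refine ⟨C₁ + C₂, fun p ↦ ?_⟩
  rw [lintegral_add_left (by fun_prop), ENNReal.coe_add, hC₂]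
  gcongr
  exact hC₁ p

theorem exists_coe_eq_volume_ball (x : E) {R : ℝ} (hR : 0 < R) :
    ∃ V : ℝ≥0, 0 < V ∧ V = volume (ball x R) :=
  ⟨_, ENNReal.toNNReal_pos (measure_ball_pos volume x hR).ne' measure_ball_lt_top.ne,
    ENNReal.coe_toNNReal measure_ball_lt_top.ne⟩

theorem exists_particleHoleKernel_le_mul_quarticWeight (t : ℝ) :
    ∃ C : ℝ≥0, ∀ q r : E, ‖r‖ < 1 → 2 ≤ ‖q‖ →
      particleHoleKernel t q r ≤ C * quarticWeight q := by
  refine ⟨(volume (ball (0 : E) t)).toNNReal * 2, fun q r hr hq ↦ ?_⟩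
  have henergy : 3 / 4 * ‖q‖ ^ 2 ≤ ‖q‖ ^ 2 - ‖r‖ ^ 2 := by nlinarith [norm_nonneg r]
  refine (belyakovKernel_le_volume_ball_mul t _ (by nlinarith)).trans ?_
  rw [ENNReal.coe_mul, ENNReal.coe_toNNReal measure_ball_lt_top.ne, mul_assoc, quarticWeight,
    ENNReal.coe_ofNat, ← ENNReal.ofReal_ofNat 2, ← ENNReal.ofReal_mul (by norm_num)]
  gcongr
  calc 1 / (‖q‖ ^ 2 - ‖r‖ ^ 2) ^ 2 ≤ 1 / (3 / 4 * ‖q‖ ^ 2) ^ 2 := by gcongr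
    _ ≤ 2 * (1 / (1 + ‖q‖ ^ 4)) := by
      have : 2 ^ 4 ≤ ‖q‖ ^ 4 := by gcongr
      rw [mul_one_div, div_le_div_iff₀ (by positivity) (by positivity)]
      linarith

theorem exists_particleWeight_le (hE : finrank ℝ E = 3) (t : ℝ) :
    ∃ C : ℝ≥0, ∀ q : E, 1 < ‖q‖ → particleWeight t q ≤ C * quarticWeight q := by
  obtain ⟨A, hA⟩ := exists_particleHoleKernel_le_singular (E := E) hE t
  obtain ⟨B, hB⟩ := exists_setLIntegral_ball_singular_le (E := E) hE
  obtain ⟨F, hF⟩ := exists_particleHoleKernel_le_mul_quarticWeight (E := E) t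
  obtain ⟨V, -, hV⟩ := exists_coe_eq_volume_ball (0 : E) one_pos
  refine ⟨A * B * 17 + F * V, fun q hq ↦ ?_⟩
  rw [ENNReal.coe_add, add_mul]
  rcases lt_or_ge ‖q‖ 2 with hq₂ | hq₂
  · refine le_add_right ?_
    have hweight : 1 ≤ (17 : ℝ≥0) * quarticWeight q := one_le_mul_quarticWeight <| by
      have : ‖q‖ ^ 4 ≤ 2 ^ 4 := by gcongr
      norm_num at this ⊢
      linarith
    calc particleWeight t q
        ≤ ∫⁻ r in ball 0 1, A * (ENNReal.ofReal (‖r - q‖ ^ (-(3 / 2) : ℝ)) +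
            ENNReal.ofReal (|‖r‖ - 1| ^ (-(1 / 2) : ℝ))) := by
          refine setLIntegral_mono' measurableSet_ball fun r hr ↦ ?_
          rw [norm_sub_rev]
          exact hA q r r (mem_ball_zero_iff.1 hr) hq (.inr rfl)
      _ ≤ A * B := by
          rw [lintegral_const_mul' _ _ ENNReal.coe_ne_top]
          gcongr
          exact (lintegral_mono_set (ball_subset_ball one_le_two)).trans (hB q)
      _ ≤ A * B * (17 * quarticWeight q) := le_mul_of_one_le_right' hweight
      _ = _ := by push_cast; ring
  · refine le_add_left ?_
    calc particleWeight t q ≤ ∫⁻ _ in ball (0 : E) 1, F * quarticWeight q :=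
          setLIntegral_mono' measurableSet_ball fun r hr ↦ hF q r (mem_ball_zero_iff.1 hr) hq₂
      _ = _ := by
          rw [setLIntegral_const, ← hV]
          push_cast
          ring

theorem exists_holeWeight_le (hE : finrank ℝ E = 3) (t : ℝ) :
    ∃ C : ℝ≥0, ∀ r : E, ‖r‖ < 1 → holeWeight t r ≤ C * quarticWeight r := by
  obtain ⟨A, hA⟩ := exists_particleHoleKernel_le_singular (E := E) hE t
  obtain ⟨B, hB⟩ := exists_setLIntegral_ball_singular_le (E := E) hE
  obtain ⟨F, hF⟩ := exists_particleHoleKernel_le_mul_quarticWeight (E := E) t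
  obtain ⟨W, hW⟩ : ∃ W : ℝ≥0, W = ∫⁻ p : E, quarticWeight p :=
    ⟨_, ENNReal.coe_toNNReal (lintegral_quarticWeight_lt_top (by omega)).ne⟩
  refine ⟨(A * B + F * W) * 2, fun r hr ↦ ?_⟩
  have hweight : 1 ≤ (2 : ℝ≥0) * quarticWeight r := one_le_mul_quarticWeight <| by
    have := pow_le_one₀ (n := 4) (norm_nonneg r) hr.le
    norm_num
    linarith
  have hnear : ∫⁻ q in ball 0 2 ∩ (closedBall 0 1)ᶜ, particleHoleKernel t q r ≤ A * B :=
    calc _ ≤ ∫⁻ q in ball 0 2 ∩ (closedBall 0 1)ᶜ,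
            A * (ENNReal.ofReal (‖q - r‖ ^ (-(3 / 2) : ℝ)) +
              ENNReal.ofReal (|‖q‖ - 1| ^ (-(1 / 2) : ℝ))) :=
          setLIntegral_mono' (by measurability) fun q hq ↦
            hA q r q hr (by simpa using hq.2) (.inl rfl)
      _ ≤ A * B := by
          rw [lintegral_const_mul' _ _ ENNReal.coe_ne_top]
          gcongr
          exact (lintegral_mono_set inter_subset_left).trans (hB r)
  have hfar : ∫⁻ q in (ball 0 2)ᶜ, particleHoleKernel t q r ≤ F * W :=
    calc _ ≤ ∫⁻ q in (ball (0 : E) 2)ᶜ, F * quarticWeight q :=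
          setLIntegral_mono' (by measurability) fun q hq ↦ hF q r hr (by simpa using hq)
      _ ≤ F * W := by
          rw [lintegral_const_mul' _ _ ENNReal.coe_ne_top, hW]
          gcongr
          exact Measure.restrict_le_self
  calc holeWeight t r
      ≤ ∫⁻ q in ball 0 2 ∩ (closedBall 0 1)ᶜ ∪ (ball 0 2)ᶜ, particleHoleKernel t q r :=
        lintegral_mono_set fun q hq ↦ by
          by_cases hq₂ : q ∈ ball (0 : E) 2
          exacts [.inl ⟨hq₂, hq⟩, .inr hq₂]
    _ ≤ A * B + F * W := (lintegral_union_le _ _ _).trans (add_le_add hnear hfar)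
    _ ≤ (A * B + F * W) * (2 * quarticWeight r) := le_mul_of_one_le_right' hweight
    _ = _ := by push_cast; ring

theorem exists_mul_quarticWeight_le_particleHoleKernel {t : ℝ} (ht : 0 < t) :
    ∃ c : ℝ≥0, 0 < c ∧ ∀ q r : E, ‖r‖ < 1 → 1 < ‖q‖ → 1 / 2 ≤ ‖q - r‖ →
      c * quarticWeight q ≤ particleHoleKernel t q r := by
  set d : ℝ := min t (1 / 4)
  have hd : 0 < d := lt_min ht (by norm_num)
  obtain ⟨V, hVpos, hV⟩ := exists_coe_eq_volume_ball (0 : E) hd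
  set m : ℝ := 1 / (1 + (t + 2) ^ 2) ^ 2
  refine ⟨V * m.toNNReal, mul_pos hVpos (toNNReal_pos.2 (by positivity)), fun q r hr hq hqr ↦ ?_⟩
  have hnorm : ‖q - r‖ ≤ 2 * ‖q‖ := (norm_sub_le q r).trans (by linarith)
  have henergy : 0 ≤ ‖q‖ ^ 2 - ‖r‖ ^ 2 := by nlinarith [norm_nonneg r]
  have htotal : ‖q‖ ^ 2 - ‖r‖ ^ 2 + (t + ‖q - r‖) ^ 2 ≤ (1 + (t + 2) ^ 2) * ‖q‖ ^ 2 := by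
    have : (t + ‖q - r‖) ^ 2 ≤ ((t + 2) * ‖q‖) ^ 2 := by gcongr; nlinarith
    nlinarith [sq_nonneg ‖r‖]
  calc (V * m.toNNReal : ℝ≥0) * quarticWeight q
      = volume (ball (0 : E) d) * ENNReal.ofReal (m * (1 / (1 + ‖q‖ ^ 4))) := by
        rw [ENNReal.ofReal_mul (by positivity), ← hV, ENNReal.coe_mul, mul_assoc]
        rfl
    _ ≤ volume (ball (0 : E) d) *
          ENNReal.ofReal (1 / (‖q‖ ^ 2 - ‖r‖ ^ 2 + (t + ‖q - r‖) ^ 2) ^ 2) := by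
        gcongr
        calc m * (1 / (1 + ‖q‖ ^ 4)) ≤ m * (1 / ‖q‖ ^ 4) := by gcongr; linarith
          _ = 1 / ((1 + (t + 2) ^ 2) * ‖q‖ ^ 2) ^ 2 := by
            rw [one_div_mul_one_div, mul_pow, ← pow_mul]
          _ ≤ _ := by gcongr
    _ ≤ particleHoleKernel t q r := volume_ball_mul_le_belyakovKernel hd (min_le_left _ _)
        (by linarith [min_le_right t (1 / 4)]) henergy

theorem exists_mul_quarticWeight_le_particleWeight {t : ℝ} (ht : 0 < t) :
    ∃ c : ℝ≥0, 0 < c ∧ ∀ q : E, 1 < ‖q‖ → c * quarticWeight q ≤ particleWeight t q := by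
  obtain ⟨c, hc, hkernel⟩ := exists_mul_quarticWeight_le_particleHoleKernel (E := E) ht
  obtain ⟨V, hVpos, hV⟩ := exists_coe_eq_volume_ball (0 : E) (R := 1 / 2) (by norm_num)
  refine ⟨c * V, mul_pos hc hVpos, fun q hq ↦ ?_⟩
  calc (c * V : ℝ≥0) * quarticWeight q = ∫⁻ _ in ball (0 : E) (1 / 2), c * quarticWeight q := by
        rw [setLIntegral_const, ← hV]
        push_cast
        ring
    _ ≤ ∫⁻ r in ball (0 : E) (1 / 2), particleHoleKernel t q r := by
        refine setLIntegral_mono' measurableSet_ball fun r hr ↦ ?_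
        rw [mem_ball_zero_iff] at hr
        exact hkernel q r (by linarith) hq (by linarith [norm_sub_norm_le q r])
    _ ≤ particleWeight t q := lintegral_mono_set (ball_subset_ball (by norm_num))

theorem exists_mul_quarticWeight_le_holeWeight [Nontrivial E] {t : ℝ} (ht : 0 < t) :
    ∃ c : ℝ≥0, 0 < c ∧ ∀ r : E, ‖r‖ < 1 → c * quarticWeight r ≤ holeWeight t r := by
  obtain ⟨c, hc, hkernel⟩ := exists_mul_quarticWeight_le_particleHoleKernel (E := E) ht
  obtain ⟨x, hx⟩ := exists_norm_eq E (c := 3) (by norm_num)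
  obtain ⟨V, hVpos, hV⟩ := exists_coe_eq_volume_ball x one_pos
  have hnorm {q : E} (hq : q ∈ ball x 1) : 2 < ‖q‖ ∧ ‖q‖ < 4 := by
    rw [mem_ball, dist_eq_norm] at hq
    constructor
    · linarith [norm_sub_norm_le x q, norm_sub_rev x q]
    · linarith [norm_sub_norm_le q x]
  refine ⟨c * (1 / 257) * V, by positivity, fun r hr ↦ ?_⟩
  calc (c * (1 / 257) * V : ℝ≥0) * quarticWeight r ≤ (c * (1 / 257) * V : ℝ≥0) :=
        mul_le_of_le_one_right' (quarticWeight_le_one r)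
    _ = ∫⁻ _ in ball x 1, c * (1 / 257 : ℝ≥0) := by
        rw [setLIntegral_const, ← hV]
        push_cast
        rfl
    _ ≤ ∫⁻ q in ball x 1, particleHoleKernel t q r := by
        refine setLIntegral_mono' measurableSet_ball fun q hq ↦ ?_
        obtain ⟨hq₂, hq₄⟩ := hnorm hq
        refine le_trans ?_ (hkernel q r hr (by linarith) (by linarith [norm_sub_norm_le q r]))
        gcongr
        have : ‖q‖ ^ 4 ≤ 4 ^ 4 := by gcongr
        rw [quarticWeight, ← ENNReal.ofReal_coe_nnreal]
        gcongr
        push_cast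
        gcongr
        linarith
    _ ≤ holeWeight t r := lintegral_mono_set fun q hq ↦ by
        simpa using one_lt_two.trans (hnorm hq).1

end Weights

section Density
variable {E : Type*} [NormedAddCommGroup E] [InnerProductSpace ℝ E] [FiniteDimensional ℝ E]
  [MeasurableSpace E] [BorelSpace E]

theorem measurable_particleHoleKernel (t : ℝ) :
    Measurable (Function.uncurry (particleHoleKernel t : E → E → ℝ≥0∞)) := by
  have hset : MeasurableSet {x : (E × E) × E | x.2 ∈ excitationSet t (-(x.1.1 - x.1.2))} := by
    simp only [excitationSet, mem_ofPred_eq]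
    measurability
  have hintegrand : Measurable fun x : (E × E) × E ↦ ENNReal.ofReal
      (1 / (‖x.1.1‖ ^ 2 - ‖x.1.2‖ ^ 2 + kineticGap (-(x.1.1 - x.1.2)) x.2) ^ 2) := by
    unfold kineticGap
    fun_prop
  convert (hintegrand.indicator hset).lintegral_prod_right' (ν := volume) using 2 with x
  exact (lintegral_indicator (measurableSet_excitationSet _ _) _).symm

theorem particleHoleKernel_smul_smul (t : ℝ) {k : ℝ} (hk : 0 < k) (q r : E) :
    particleHoleKernel (t * k) (k • q) (k • r) =
      ENNReal.ofReal (k ^ finrank ℝ E / k ^ 4) * particleHoleKernel t q r := by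
  have hset : (k • ·) ⁻¹' excitationSet (t * k) (-(k • q - k • r)) =
      excitationSet t (-(q - r)) := by
    ext s
    have : k • s + -(k • q - k • r) = k • (s + -(q - r)) := by module
    simp only [excitationSet, mem_preimage, mem_ofPred_eq, this, norm_smul, norm_of_nonneg hk.le]
    rw [mul_comm t, mul_lt_mul_iff_right₀ hk, mul_lt_mul_iff_right₀ hk]
  unfold particleHoleKernel belyakovKernel
  rw [setLIntegral_eq_pow_finrank_mul_setLIntegral_comp_smul
    volume hk (measurableSet_excitationSet _ _), hset, div_eq_mul_inv,
    ENNReal.ofReal_mul (by positivity), mul_assoc,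
    ← lintegral_const_mul' (ENNReal.ofReal (k ^ 4)⁻¹) _ ENNReal.ofReal_ne_top]
  congr 1
  refine lintegral_congr fun s ↦ ?_
  have : k • s + -(k • q - k • r) = k • (s + -(q - r)) := by module
  rw [← ENNReal.ofReal_mul (by positivity)]
  simp only [kineticGap, this, norm_smul, norm_of_nonneg hk.le]
  congr 1
  rw [one_div, one_div, ← mul_inv]
  ring

theorem lintegral_setLIntegral_excitationSet_comp_add (k : ℝ) {F : E → E → ℝ≥0∞}
    (hF : Measurable (Function.uncurry F)) :
    ∫⁻ p, ∫⁻ r in excitationSet k p, F (r + p) r =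
      ∫⁻ q in (closedBall 0 k)ᶜ, ∫⁻ r in ball 0 k, F q r := by
  set S : Set (E × E) := (closedBall 0 k)ᶜ ×ˢ ball 0 k
  have hS : MeasurableSet S := measurableSet_closedBall.compl.prod measurableSet_ball
  have hH : Measurable (S.indicator (Function.uncurry F)) := hF.indicator hS
  have hpreimage (p : E) : excitationSet k p = (fun r ↦ (r + p, r)) ⁻¹' S := by
    ext r; simp [S, excitationSet, and_comm]
  calc ∫⁻ p, ∫⁻ r in excitationSet k p, F (r + p) r
      = ∫⁻ p, ∫⁻ r, S.indicator (Function.uncurry F) (r + p, r) := by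
        refine lintegral_congr fun p ↦ ?_
        rw [← lintegral_indicator (measurableSet_excitationSet k p), hpreimage]
        exact lintegral_congr fun r ↦ indicator_comp_right (s := S)
          (g := Function.uncurry F) fun r ↦ (r + p, r)
    _ = ∫⁻ r, ∫⁻ p, S.indicator (Function.uncurry F) (r + p, r) :=
        lintegral_lintegral_swap (by fun_prop)
    _ = ∫⁻ r, ∫⁻ q, S.indicator (Function.uncurry F) (q, r) := lintegral_congr fun r ↦
        lintegral_add_left_eq_self (fun q ↦ S.indicator (Function.uncurry F) (q, r)) r
    _ = ∫⁻ x in S, Function.uncurry F x ∂(volume.prod volume) := by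
        rw [← lintegral_indicator hS, lintegral_prod_symm _ hH.aemeasurable]
    _ = ∫⁻ q in (closedBall 0 k)ᶜ, ∫⁻ r in ball 0 k, F q r :=
        setLIntegral_prod _ hF.aemeasurable.restrict

/-- The Belyakov excitation density, with Fermi momenta `k` and `k'`, scattering length `a` and
`G` the Fourier transform of the smearing function. -/
noncomputable def belyakovDensity (a k k' : ℝ) (G : E → ℝ) : ℝ≥0∞ :=
  ENNReal.ofReal (a ^ 2 / π ^ 4) *
    ∫⁻ p : E, ∫⁻ r in {r : E | ‖r‖ < k ∧ k < ‖r + p‖},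
      ∫⁻ r' in {r' : E | ‖r'‖ < k' ∧ k' < ‖r' - p‖},
        ENNReal.ofReal ((G (r + p) + G (-r)) /
          (‖r + p‖ ^ 2 - ‖r‖ ^ 2 + ‖r' - p‖ ^ 2 - ‖r'‖ ^ 2) ^ 2)

theorem belyakovDensity_eq_lintegral_particleHoleKernel (a k k' : ℝ) {G : E → ℝ}
    (hG : Measurable G) (hG₀ : ∀ y, 0 ≤ G y) :
    belyakovDensity a k k' G = ENNReal.ofReal (a ^ 2 / π ^ 4) *
      ∫⁻ q in (closedBall 0 k)ᶜ, ∫⁻ r in ball 0 k,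
        (ENNReal.ofReal (G q) + ENNReal.ofReal (G (-r))) * particleHoleKernel k' q r := by
  have hmeas : Measurable (Function.uncurry fun q r : E ↦
      (ENNReal.ofReal (G q) + ENNReal.ofReal (G (-r))) * particleHoleKernel k' q r) := by
    refine Measurable.mul ?_ (measurable_particleHoleKernel k')
    fun_prop
  rw [← lintegral_setLIntegral_excitationSet_comp_add k hmeas, belyakovDensity]
  congr 1
  refine lintegral_congr fun p ↦ lintegral_congr fun r ↦ ?_
  rw [← ENNReal.ofReal_add (hG₀ _) (hG₀ _), particleHoleKernel, belyakovKernel,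
    ← lintegral_const_mul' _ _ ENNReal.ofReal_ne_top, add_sub_cancel_left]
  simp only [excitationSet, kineticGap, ← sub_eq_add_neg, add_sub_assoc, mul_one_div,
    ← ENNReal.ofReal_mul (add_nonneg (hG₀ (r + p)) (hG₀ (-r)))]

/-- The Belyakov density with Fermi momenta `1` and `t`, without its prefactor, sorted into the
contributions of particles and of holes. The smearing enters through `f`. -/
noncomputable def reducedBelyakovDensity (t : ℝ) (f : E → ℝ≥0∞) : ℝ≥0∞ :=
  (∫⁻ q in (closedBall 0 1)ᶜ, f q * particleWeight t q) +
    ∫⁻ r in ball 0 1, f (-r) * holeWeight t r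

theorem belyakovDensity_eq_mul_reducedBelyakovDensity (hE : finrank ℝ E = 3) (a t : ℝ) {k : ℝ}
    (hk : 0 < k) {G : E → ℝ} (hG : Measurable G) (hG₀ : ∀ y, 0 ≤ G y) :
    belyakovDensity a k (t * k) G = ENNReal.ofReal (a ^ 2 / π ^ 4 * k ^ 5) *
      reducedBelyakovDensity t fun p ↦ ENNReal.ofReal (G (k • p)) := by
  have hball : (k • · : E → E) ⁻¹' ball 0 k = ball 0 1 := by
    ext x; simp [norm_smul, abs_of_pos hk, hk]
  have hcompl : (k • · : E → E) ⁻¹' (closedBall 0 k)ᶜ = (closedBall 0 1)ᶜ := by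
    ext x; simp [norm_smul, abs_of_pos hk, hk]
  have hpow : ENNReal.ofReal (k ^ 5) =
      ENNReal.ofReal (k ^ 3) * (ENNReal.ofReal (k ^ 3) * ENNReal.ofReal (k ^ 3 / k ^ 4)) := by
    rw [← ENNReal.ofReal_mul (by positivity), ← ENNReal.ofReal_mul (by positivity)]
    congr 1
    field_simp
  unfold reducedBelyakovDensity particleWeight holeWeight
  rw [← lintegral_lintegral_add_mul (by fun_prop) (by fun_prop) (measurable_particleHoleKernel t),
    belyakovDensity_eq_lintegral_particleHoleKernel a k (t * k) hG hG₀,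
    setLIntegral_eq_pow_finrank_mul_setLIntegral_comp_smul volume hk
      measurableSet_closedBall.compl, hcompl, ENNReal.ofReal_mul (by positivity), mul_assoc, hpow]
  simp only [setLIntegral_eq_pow_finrank_mul_setLIntegral_comp_smul (volume : Measure E) hk
    measurableSet_ball, hball, particleHoleKernel_smul_smul t hk, hE, ← smul_neg,
    mul_left_comm _ (ENNReal.ofReal (k ^ 3 / k ^ 4)), mul_assoc,
    lintegral_const_mul' _ _ ENNReal.ofReal_ne_top]

theorem lintegral_mul_quarticWeight_eq [Nontrivial E] (f : E → ℝ≥0∞) :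
    ∫⁻ p, f p * quarticWeight p = (∫⁻ q in (closedBall 0 1)ᶜ, f q * quarticWeight q) +
      ∫⁻ r in ball 0 1, f (-r) * quarticWeight r := by
  rw [← lintegral_compl_closedBall_add_ball_neg volume 1]
  simp only [quarticWeight, norm_neg]

theorem exists_mul_lintegral_quarticWeight_le_reducedBelyakovDensity [Nontrivial E] {t : ℝ}
    (ht : 0 < t) :
    ∃ c : ℝ≥0, 0 < c ∧ ∀ f : E → ℝ≥0∞,
      c * ∫⁻ p, f p * quarticWeight p ≤ reducedBelyakovDensity t f := by
  obtain ⟨c₁, hc₁, hparticle⟩ := exists_mul_quarticWeight_le_particleWeight (E := E) ht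
  obtain ⟨c₂, hc₂, hhole⟩ := exists_mul_quarticWeight_le_holeWeight (E := E) ht
  refine ⟨min c₁ c₂, lt_min hc₁ hc₂, fun f ↦ ?_⟩
  rw [lintegral_mul_quarticWeight_eq, mul_add]
  refine add_le_add
    (const_mul_setLIntegral_mul_le measurableSet_closedBall.compl f fun q hq ↦ ?_)
    (const_mul_setLIntegral_mul_le measurableSet_ball (fun r ↦ f (-r)) fun r hr ↦ ?_)
  · refine le_trans ?_ (hparticle q (by simpa using hq))
    gcongr
    exact min_le_left _ _
  · refine le_trans ?_ (hhole r (mem_ball_zero_iff.1 hr))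
    gcongr
    exact min_le_right _ _

theorem exists_reducedBelyakovDensity_le_mul_lintegral_quarticWeight (hE : finrank ℝ E = 3)
    (t : ℝ) :
    ∃ C : ℝ≥0, 0 < C ∧ ∀ f : E → ℝ≥0∞,
      reducedBelyakovDensity t f ≤ C * ∫⁻ p, f p * quarticWeight p := by
  have : Nontrivial E := nontrivial_of_finrank_pos (R := ℝ) (by omega)
  obtain ⟨C₁, hparticle⟩ := exists_particleWeight_le (E := E) hE t
  obtain ⟨C₂, hhole⟩ := exists_holeWeight_le (E := E) hE t
  refine ⟨C₁ + C₂ + 1, by positivity, fun f ↦ ?_⟩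
  rw [lintegral_mul_quarticWeight_eq, mul_add]
  refine add_le_add
    (setLIntegral_mul_le_const_mul measurableSet_closedBall.compl f fun q hq ↦ ?_)
    (setLIntegral_mul_le_const_mul measurableSet_ball (fun r ↦ f (-r)) fun r hr ↦ ?_)
  · refine (hparticle q (by simpa using hq)).trans ?_
    gcongr
    exact le_add_right le_self_add
  · refine (hhole r (mem_ball_zero_iff.1 hr)).trans ?_
    gcongr
    exact le_add_right le_add_self

theorem belyakov_density_two_sided_bound_general (hE : finrank ℝ E = 3) {t : ℝ} (ht : 0 < t) :
    ∃ c C : ℝ, 0 < c ∧ 0 < C ∧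
    ∀ (a k k' : ℝ) (G : E → ℝ), 0 < k → k' / k = t → Measurable G → (∀ y, 0 ≤ G y) →
      ENNReal.ofReal (c * a ^ 2 * k ^ 5) * ∫⁻ p : E, ENNReal.ofReal (G (k • p) / (1 + ‖p‖ ^ 4)) ≤
        belyakovDensity a k k' G ∧
      belyakovDensity a k k' G ≤
        ENNReal.ofReal (C * a ^ 2 * k ^ 5) *
          ∫⁻ p : E, ENNReal.ofReal (G (k • p) / (1 + ‖p‖ ^ 4)) := by
  have : Nontrivial E := nontrivial_of_finrank_pos (R := ℝ) (by omega)
  obtain ⟨c, hc, hlower⟩ :=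
    exists_mul_lintegral_quarticWeight_le_reducedBelyakovDensity (E := E) ht
  obtain ⟨C, hC, hupper⟩ := exists_reducedBelyakovDensity_le_mul_lintegral_quarticWeight hE t
  refine ⟨c / π ^ 4, C / π ^ 4, by positivity, by positivity, fun a k k' G hk hkk' hG hG₀ ↦ ?_⟩
  have hprefactor (x : ℝ≥0) : ENNReal.ofReal (x / π ^ 4 * a ^ 2 * k ^ 5) =
      ENNReal.ofReal (a ^ 2 / π ^ 4 * k ^ 5) * x := by
    rw [← ENNReal.ofReal_coe_nnreal, ← ENNReal.ofReal_mul (by positivity)]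
    ring_nf
  have hweight (p : E) : ENNReal.ofReal (G (k • p) / (1 + ‖p‖ ^ 4)) =
      ENNReal.ofReal (G (k • p)) * quarticWeight p := by
    rw [quarticWeight, ← ENNReal.ofReal_mul (hG₀ _), mul_one_div]
  rw [(div_eq_iff hk.ne').1 hkk', belyakovDensity_eq_mul_reducedBelyakovDensity hE a t hk hG hG₀]
  simp only [hprefactor, hweight, mul_assoc (ENNReal.ofReal _) (ENNReal.ofNNReal _)]
  exact ⟨mul_le_mul_right (hlower _) _, mul_le_mul_right (hupper _) _⟩

end Density

end

/-- Two-sided bound on the Belyakov excitation density (Proposition 3.3, eq. ngBelyakovbound):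
for Fermi momenta `k, k' > 0` and a bounded measurable `G : ℝ³ → [0,∞)`, with constants `c, C`
depending only on the ratio `k'/k`,
`c a² k⁵ ∫ G(kp)/(1+|p|⁴) dp ≤ n^{Bel}(G) ≤ C a² k⁵ ∫ G(kp)/(1+|p|⁴) dp`. -/
theorem belyakov_density_two_sided_bound :
    ∀ t : ℝ, 0 < t →
    ∃ c C : ℝ, 0 < c ∧ 0 < C ∧
    ∀ (a k k' : ℝ) (G : E3 → ℝ),
      0 < a → 0 < k → 0 < k' → k' / k = t →
      Measurable G → (∀ y, 0 ≤ G y) → (∃ M : ℝ, ∀ y, G y ≤ M) →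
      (ENNReal.ofReal (c * a ^ 2 * k ^ 5) *
          ∫⁻ p : E3, ENNReal.ofReal (G (k • p) / (1 + ‖p‖ ^ 4)))
        ≤ (ENNReal.ofReal (a ^ 2 / π ^ 4) *
            ∫⁻ p : E3, ∫⁻ r in {r : E3 | ‖r‖ < k ∧ k < ‖r + p‖},
              ∫⁻ r' in {r' : E3 | ‖r'‖ < k' ∧ k' < ‖r' - p‖},
                ENNReal.ofReal ((G (r + p) + G (-r)) /
                  (‖r + p‖ ^ 2 - ‖r‖ ^ 2 + ‖r' - p‖ ^ 2 - ‖r'‖ ^ 2) ^ 2))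
      ∧ (ENNReal.ofReal (a ^ 2 / π ^ 4) *
            ∫⁻ p : E3, ∫⁻ r in {r : E3 | ‖r‖ < k ∧ k < ‖r + p‖},
              ∫⁻ r' in {r' : E3 | ‖r'‖ < k' ∧ k' < ‖r' - p‖},
                ENNReal.ofReal ((G (r + p) + G (-r)) /
                  (‖r + p‖ ^ 2 - ‖r‖ ^ 2 + ‖r' - p‖ ^ 2 - ‖r'‖ ^ 2) ^ 2))
        ≤ ENNReal.ofReal (C * a ^ 2 * k ^ 5) *
            ∫⁻ p : E3, ENNReal.ofReal (G (k • p) / (1 + ‖p‖ ^ 4)) := by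
  intro t ht
  obtain ⟨c, C, hc, hC, hbound⟩ :=
    belyakov_density_two_sided_bound_general (E := E3) finrank_euclideanSpace_fin ht
  exact ⟨c, C, hc, hC, fun a k k' G _ hk _ hkk' hG hG₀ _ ↦ hbound a k k' G hk hkk' hG hG₀⟩
end

section
/- Let δ > 2/9, c₀, C₀ > 0 and a > 0. There exist ρ₀ > 0 and C > 0 (depending only on δ, c₀, C₀, a) such that the following holds for all 0 < ρ ≤ ρ₀. Let ε := ρ^{2/3+δ}, let k₁, k₂ satisfy c₀ ρ^{1/3} ≤ k_j ≤ C₀ ρ^{1/3} (j = 1,2), let χ : ℝ³ → [0,1] be measurable with χ(p) = 1 for |p| ≤ 4ρ^{2/9} and χ(p) = 0 for |p| ≥ 5ρ^{2/9}, and let G : ℝ³ → ℝ be bounded and measurable. With E(p,r,r') := |r+p|² − |r|² + |r'−p|² − |r'|² and W(p,r,r') := G(r+p) + G(−r) + G(r'−p) + G(−r'), define n^{Bel} := (a²/π⁴) ∫_{ℝ³} dp ∫_{|r|≤k₁<|r+p|} dr ∫_{|r'|≤k₂<|r'−p|} dr' W/E² and 𝒞 := (a²/π⁴) ∫_{ℝ³}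 dp ∫_{|r|≤k₁<|r+p|} dr ∫_{|r'|≤k₂<|r'−p|} dr' W χ(p)²/(E + 2ε)². Then |n^{Bel} − 𝒞| ≤ C ‖G‖_∞ ρ^{5/3 + 1/9}. -/
open MeasureTheory Real
open scoped ENNReal

/-!
Writing the two constants as integrals over triples `q = (p, r, r')`, their difference is the
integral of `W` against `E⁻² - χ² / (E + 2ε)²`, and `|W| ≤ 4 ‖G‖_∞` almost everywhere. Where
`χ(p) = 1` the kernel is at most `4 ε E⁻³`; elsewhere `|p| ≥ 4 ρ^{2/9}` is large compared with the
Fermi momenta, so that `E ≥ |p|²` and the kernel is at most `|p|⁻⁴`, whose integral over the two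
Fermi balls and the far region of `p` is of order `k₁³ k₂³ ρ^{-2/9}`.

The remaining point is that `E⁻³` is integrable. Since `E = x + y`, where `x` and `y` are the energy
gains of the two particles, `E⁻³ ≤ x^{-3/2} y^{-3/2} / 8` by AM–GM. This decouples `r` from `r'`,
and `x^{-3/2}` is integrable over the lune `|r| ≤ k < |r + p|` by slicing orthogonally to `p`.
-/

section Radial

variable {E : Type*} [NormedAddCommGroup E] [NormedSpace ℝ E] [FiniteDimensional ℝ E]
  [Nontrivial E] [MeasurableSpace E] [BorelSpace E] (μ : Measure E) [μ.IsAddHaarMeasure]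

lemma lintegral_fun_norm_addHaar {f : ℝ → ℝ≥0∞} (hf : Measurable f) :
    ∫⁻ x, f ‖x‖ ∂μ = Module.finrank ℝ E * μ (Metric.ball 0 1) *
      ∫⁻ y in Set.Ioi (0 : ℝ), ENNReal.ofReal (y ^ (Module.finrank ℝ E - 1)) * f y := by
  calc ∫⁻ x, f ‖x‖ ∂μ
    _ = ∫⁻ x : ({0}ᶜ : Set E), f ‖(x : E)‖ ∂μ.comap (↑) := by
      rw [lintegral_subtype_comap (measurableSet_singleton _).compl fun x ↦ f ‖x‖,
        restrict_compl_singleton]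
    _ = ∫⁻ z : Metric.sphere (0 : E) 1 × Set.Ioi (0 : ℝ), f z.2
          ∂μ.toSphere.prod (.volumeIoiPow (Module.finrank ℝ E - 1)) := by
      simpa using! (μ.measurePreserving_homeomorphUnitSphereProd).lintegral_comp
        (f := fun z : Metric.sphere (0 : E) 1 × Set.Ioi (0 : ℝ) ↦ f z.2) (by fun_prop)
    _ = μ.toSphere Set.univ *
          ∫⁻ y : Set.Ioi (0 : ℝ), f y ∂.volumeIoiPow (Module.finrank ℝ E - 1) := by
      simpa using lintegral_prod_mul (μ := μ.toSphere)
        (ν := .volumeIoiPow (Module.finrank ℝ E - 1)) (f := fun _ ↦ 1)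
        (g := fun y : Set.Ioi (0 : ℝ) ↦ f y) aemeasurable_const (by fun_prop)
    _ = _ := by
      rw [μ.toSphere_apply_univ, Measure.volumeIoiPow,
        lintegral_withDensity_eq_lintegral_mul (g := fun y : Set.Ioi (0 : ℝ) ↦ f y) _
          (by fun_prop) (by fun_prop)]
      congr 1
      exact lintegral_subtype_comap measurableSet_Ioi
        fun y ↦ ENNReal.ofReal (y ^ (Module.finrank ℝ E - 1)) * f y

lemma setLIntegral_norm_preimage_rpow {t : Set ℝ} (ht : MeasurableSet t) (s : ℝ) :
    ∫⁻ x in norm ⁻¹' t, ENNReal.ofReal (‖x‖ ^ s) ∂μ =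
      Module.finrank ℝ E * μ (Metric.ball 0 1) *
        ∫⁻ y in t ∩ Set.Ioi 0, ENNReal.ofReal (y ^ (Module.finrank ℝ E + s - 1)) := by
  have hpow : ∀ y ∈ Set.Ioi (0 : ℝ),
      ENNReal.ofReal (y ^ (Module.finrank ℝ E - 1)) *
        t.indicator (fun y ↦ ENNReal.ofReal (y ^ s)) y =
      t.indicator (fun y ↦ ENNReal.ofReal (y ^ (Module.finrank ℝ E + s - 1))) y := by
    intro y (hy : 0 < y)
    have hexp : (Module.finrank ℝ E : ℝ) + s - 1 = (Module.finrank ℝ E - 1 : ℕ) + s := by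
      rw [Nat.cast_pred Module.finrank_pos]
      ring
    by_cases hyt : y ∈ t
    · rw [Set.indicator_of_mem hyt, Set.indicator_of_mem hyt, hexp, rpow_add hy, rpow_natCast,
        ENNReal.ofReal_mul (by positivity)]
    · simp [hyt]
  rw [← lintegral_indicator (measurable_norm ht), ← setLIntegral_indicator ht,
    ← setLIntegral_congr_fun measurableSet_Ioi hpow]
  exact lintegral_fun_norm_addHaar μ (f := t.indicator fun y ↦ ENNReal.ofReal (y ^ s))
    (Measurable.indicator (by fun_prop) ht)

lemma setLIntegral_ball_norm_rpow {s R : ℝ} (hs : -Module.finrank ℝ E < s) (hR : 0 ≤ R) :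
    ∫⁻ x in Metric.ball 0 R, ENNReal.ofReal (‖x‖ ^ s) ∂μ =
      Module.finrank ℝ E * μ (Metric.ball 0 1) *
        ENNReal.ofReal (R ^ (Module.finrank ℝ E + s) / (Module.finrank ℝ E + s)) := by
  have hball : Metric.ball (0 : E) R = norm ⁻¹' Set.Iio R := by ext; simp
  have hint := (intervalIntegrable_iff_integrableOn_Ioo_of_le hR).1
    (intervalIntegral.intervalIntegrable_rpow' (r := Module.finrank ℝ E + s - 1) (by linarith))
  rw [hball, setLIntegral_norm_preimage_rpow μ measurableSet_Iio, Set.inter_comm, Set.Ioi_inter_Iio,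
    ← ofReal_integral_eq_lintegral_ofReal hint
      ((ae_restrict_mem measurableSet_Ioo).mono fun y hy ↦ rpow_nonneg hy.1.le _),
    ← integral_Ioc_eq_integral_Ioo, ← intervalIntegral.integral_of_le hR,
    integral_rpow (.inl (by linarith)), sub_add_cancel, zero_rpow (by linarith), sub_zero]

lemma setLIntegral_le_norm_rpow {s R : ℝ} (hs : s < -Module.finrank ℝ E) (hR : 0 < R) :
    ∫⁻ x in {x | R ≤ ‖x‖}, ENNReal.ofReal (‖x‖ ^ s) ∂μ =
      Module.finrank ℝ E * μ (Metric.ball 0 1) *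
        ENNReal.ofReal (-R ^ (Module.finrank ℝ E + s) / (Module.finrank ℝ E + s)) := by
  have hexp : (Module.finrank ℝ E : ℝ) + s - 1 < -1 := by linarith
  have hinter : Set.Ici R ∩ Set.Ioi 0 = Set.Ici R :=
    Set.inter_eq_left.2 fun y hy ↦ hR.trans_le hy
  have hradial := setLIntegral_norm_preimage_rpow μ (measurableSet_Ici (a := R)) s
  rw [hinter, setLIntegral_congr Ioi_ae_eq_Ici.symm,
    ← ofReal_integral_eq_lintegral_ofReal (integrableOn_Ioi_rpow_of_lt hexp hR)
      ((ae_restrict_mem measurableSet_Ioi).mono fun y hy ↦ rpow_nonneg (hR.trans hy).le _),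
    integral_Ioi_rpow_of_lt hexp hR, sub_add_cancel] at hradial
  exact hradial

end Radial

section Sections

variable {α β : Type*} [MeasurableSpace α] [MeasurableSpace β] {μ : Measure α} {ν : Measure β}
  [SFinite ν] {D : Set (α × β)}

lemma setLIntegral_eq_lintegral_section {f : α × β → ℝ≥0∞} (hD : MeasurableSet D)
    (hf : Measurable f) :
    ∫⁻ z in D, f z ∂μ.prod ν = ∫⁻ a, ∫⁻ b in Prod.mk a ⁻¹' D, f (a, b) ∂ν ∂μ := by
  rw [← lintegral_indicator hD, lintegral_prod _ (hf.indicator hD).aemeasurable]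
  refine lintegral_congr fun a ↦ ?_
  rw [← lintegral_indicator (measurable_prodMk_left hD)]
  rfl

variable [SFinite μ]

lemma setLIntegral_inter_fst_preimage {f : α × β → ℝ≥0∞} {s : Set α} (hD : MeasurableSet D)
    (hf : Measurable f) :
    ∫⁻ z in D ∩ Prod.fst ⁻¹' s, f z ∂μ.prod ν =
      ∫⁻ a in s, ∫⁻ b in Prod.mk a ⁻¹' D, f (a, b) ∂ν ∂μ := by
  rw [← setLIntegral_eq_lintegral_section hD hf, Measure.restrict_prod_eq_prod_univ,
    Measure.restrict_restrict hD, Set.prod_univ]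

variable {F : Type*} [NormedAddCommGroup F] {f : α × β → F}

lemma ae_integrableOn_section (hD : MeasurableSet D) (hf : IntegrableOn f D (μ.prod ν)) :
    ∀ᵐ a ∂μ, IntegrableOn (fun b ↦ f (a, b)) (Prod.mk a ⁻¹' D) ν := by
  filter_upwards [((integrable_indicator_iff hD).2 hf).prod_right_ae] with a ha
  exact (integrable_indicator_iff (measurable_prodMk_left hD)).1 ha

lemma setIntegral_eq_integral_section [NormedSpace ℝ F] (hD : MeasurableSet D)
    (hf : IntegrableOn f D (μ.prod ν)) :
    ∫ z in D, f z ∂μ.prod ν = ∫ a, ∫ b in Prod.mk a ⁻¹' D, f (a, b) ∂ν ∂μ := by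
  rw [← integral_indicator hD, integral_prod _ ((integrable_indicator_iff hD).2 hf)]
  refine integral_congr_ae (.of_forall fun a ↦ ?_)
  simp only
  rw [← integral_indicator (measurable_prodMk_left hD)]
  rfl

end Sections

lemma quasiMeasurePreserving_of_surjective {𝕜 E F : Type*} [NontriviallyNormedField 𝕜]
    [CompleteSpace 𝕜] [NormedAddCommGroup E] [MeasurableSpace E] [BorelSpace E] [NormedSpace 𝕜 E]
    [LocallyCompactSpace E] [NormedAddCommGroup F] [MeasurableSpace F] [BorelSpace F]
    [NormedSpace 𝕜 F] (L : E →L[𝕜] F) (hL : Function.Surjective L) (μ : Measure E) (ν : Measure F)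
    [μ.IsAddHaarMeasure] [ν.IsAddHaarMeasure] : Measure.QuasiMeasurePreserving L μ ν := by
  obtain ⟨c, -, hc⟩ := (L : E →ₗ[𝕜] F).exists_map_addHaar_eq_smul_addHaar μ ν hL
  exact ⟨L.continuous.measurable, hc ▸ Measure.smul_absolutelyContinuous⟩

section EuclideanSlices

lemma lintegral_euclideanSpace_fin_succ {n : ℕ} {g : EuclideanSpace ℝ (Fin (n + 1)) → ℝ≥0∞}
    (hg : Measurable g) :
    ∫⁻ x, g x = ∫⁻ u : ℝ, ∫⁻ w : EuclideanSpace ℝ (Fin n),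
      g (WithLp.toLp 2 (Fin.cons u w.ofLp)) := by
  have hcons : Measurable fun z : ℝ × (Fin n → ℝ) ↦ g (WithLp.toLp 2 (Fin.cons z.1 z.2)) := by
    refine hg.comp ((PiLp.volume_preserving_toLp _).measurable.comp ?_)
    refine measurable_pi_iff.2 (Fin.cases ?_ fun j ↦ ?_)
    · simpa using measurable_fst
    · simp only [Fin.cons_succ]
      fun_prop
  calc ∫⁻ x, g x
    _ = ∫⁻ v : Fin (n + 1) → ℝ, g (WithLp.toLp 2 v) :=
      ((PiLp.volume_preserving_toLp _).lintegral_comp hg).symm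
    _ = ∫⁻ z : ℝ × (Fin n → ℝ), g (WithLp.toLp 2 (Fin.cons z.1 z.2)) := by
      rw [← (volume_preserving_piFinSuccAbove (fun _ : Fin (n + 1) ↦ ℝ) 0).symm.lintegral_comp
        (f := fun v ↦ g (WithLp.toLp 2 v)) (by fun_prop)]
      simp [MeasurableEquiv.piFinSuccAbove, Fin.insertNthEquiv]
    _ = ∫⁻ u : ℝ, ∫⁻ w : Fin n → ℝ, g (WithLp.toLp 2 (Fin.cons u w)) := by
      rw [Measure.volume_eq_prod, lintegral_prod _ hcons.aemeasurable]
    _ = _ := lintegral_congr fun u ↦ ((PiLp.volume_preserving_ofLp _).lintegral_comp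
      (hcons.comp measurable_prodMk_left)).symm

lemma norm_sq_toLp_cons {n : ℕ} (u : ℝ) (w : Fin n → ℝ) :
    ‖(WithLp.toLp 2 (Fin.cons u w) : EuclideanSpace ℝ (Fin (n + 1)))‖ ^ 2 =
      u ^ 2 + ‖WithLp.toLp 2 w‖ ^ 2 := by
  simp [EuclideanSpace.norm_sq_eq, Fin.sum_univ_succ]

lemma volume_norm_sq_le_fin_two (A : ℝ) :
    volume {w : EuclideanSpace ℝ (Fin 2) | ‖w‖ ^ 2 ≤ A} = ENNReal.ofReal (π * A) := by
  rcases lt_or_ge A 0 with hA | hA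
  · rw [ENNReal.ofReal_of_nonpos (by nlinarith [pi_pos])]
    convert measure_empty (μ := volume (α := EuclideanSpace ℝ (Fin 2)))
    exact Set.eq_empty_of_forall_notMem fun w hw ↦ (hA.trans_le (sq_nonneg ‖w‖)).not_ge hw
  · have hball : {w : EuclideanSpace ℝ (Fin 2) | ‖w‖ ^ 2 ≤ A} = Metric.closedBall 0 √A := by
      ext w
      simp [Real.le_sqrt (norm_nonneg w) hA]
    rw [hball, EuclideanSpace.volume_closedBall_fin_two, ← ENNReal.ofReal_pow (by positivity),
      sq_sqrt hA, mul_comm π, ENNReal.ofReal_mul hA]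

lemma volume_annulus_fin_two_le (A : ℝ) {x : ℝ} (hx : 0 ≤ x) :
    volume {w : EuclideanSpace ℝ (Fin 2) | ‖w‖ ^ 2 ≤ A ∧ A - x < ‖w‖ ^ 2} ≤
      ENNReal.ofReal (π * x) := by
  have hdiff : {w : EuclideanSpace ℝ (Fin 2) | ‖w‖ ^ 2 ≤ A ∧ A - x < ‖w‖ ^ 2} =
      {w | ‖w‖ ^ 2 ≤ A} \ {w | ‖w‖ ^ 2 ≤ A - x} := by
    ext w
    simp
  have hsub : {w : EuclideanSpace ℝ (Fin 2) | ‖w‖ ^ 2 ≤ A - x} ⊆ {w | ‖w‖ ^ 2 ≤ A} :=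
    fun w (hw : ‖w‖ ^ 2 ≤ A - x) ↦ hw.trans (by linarith)
  rw [hdiff, measure_sdiff hsub (measurableSet_le (by fun_prop) (by fun_prop)).nullMeasurableSet
    (by simp [volume_norm_sq_le_fin_two]), volume_norm_sq_le_fin_two, volume_norm_sq_le_fin_two,
    tsub_le_iff_right]
  refine le_trans (le_of_eq ?_) ENNReal.ofReal_add_le
  ring_nf

end EuclideanSlices

lemma setLIntegral_Ioc_inv_sqrt_affine {b m k : ℝ} (hm : 0 < m) (hk : -b / m ≤ k) :
    ∫⁻ u in Set.Ioc (-b / m) k, ENNReal.ofReal (√(b + m * u))⁻¹ =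
      ENNReal.ofReal (2 * √(b + m * k) / m) := by
  have hcont : ContinuousOn (fun u ↦ 2 * √(b + m * u) / m) (Set.Icc (-b / m) k) := by fun_prop
  have hderiv : ∀ u ∈ Set.Ioo (-b / m) k,
      HasDerivAt (fun u ↦ 2 * √(b + m * u) / m) (√(b + m * u))⁻¹ u := by
    intro u hu
    have hpos : 0 < b + m * u := by linarith [(div_lt_iff₀' hm).1 hu.1]
    have haffine : HasDerivAt (fun u ↦ b + m * u) m u := by
      simpa using ((hasDerivAt_id u).const_mul m).const_add b
    refine (((haffine.sqrt hpos.ne').const_mul 2).div_const m).congr_deriv ?_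
    field_simp
  have hint : IntegrableOn (fun u ↦ (√(b + m * u))⁻¹) (Set.Ioc (-b / m) k) :=
    intervalIntegral.integrableOn_deriv_of_nonneg hcont hderiv fun u _ ↦ by positivity
  have hzero : b + m * (-b / m) = 0 := by
    field_simp
    ring
  rw [← ofReal_integral_eq_lintegral_ofReal hint (.of_forall fun u ↦ by positivity),
    ← intervalIntegral.integral_of_le hk,
    intervalIntegral.integral_eq_sub_of_hasDerivAt_of_le hk hcont hderiv
      ((intervalIntegrable_iff_integrableOn_Ioc_of_le hk).2 hint), hzero]
  simp

section FermiLune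

/-- The momenta `r` in the Fermi ball of radius `k` which a transfer of momentum `p` moves out of
that ball. -/
def fermiLune (k : ℝ) (p : E3) : Set E3 := {r | ‖r‖ ≤ k ∧ k < ‖r + p‖}

/-- The kinetic energy gained by a particle of momentum `r` absorbing the momentum `p`. -/
noncomputable def energyGain (p r : E3) : ℝ := ‖r + p‖ ^ 2 - ‖r‖ ^ 2

variable {k K : ℝ} {p r : E3}

@[fun_prop]
lemma measurable_energyGain (p : E3) : Measurable (energyGain p) := by
  unfold energyGain
  fun_prop

lemma measurableSet_fermiLune : MeasurableSet (fermiLune k p) := by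
  unfold fermiLune
  measurability

lemma energyGain_pos (hr : r ∈ fermiLune k p) : 0 < energyGain p r :=
  sub_pos.2 (pow_lt_pow_left₀ (hr.1.trans_lt hr.2) (norm_nonneg r) two_ne_zero)

lemma energyGain_le (hr : ‖r‖ ≤ K) : energyGain p r ≤ ‖p‖ ^ 2 + 2 * ‖p‖ * K := by
  have := norm_add_le r p
  have := norm_nonneg p
  unfold energyGain
  nlinarith [norm_nonneg (r + p), norm_nonneg r]

lemma le_energyGain (hr : ‖r‖ ≤ K) : ‖p‖ ^ 2 - 2 * ‖p‖ * K ≤ energyGain p r := by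
  have hsq : (‖p‖ - ‖r‖) ^ 2 ≤ ‖r + p‖ ^ 2 := by
    rw [add_comm, ← sub_neg_eq_add, ← norm_neg r]
    exact sq_le_sq.2 ((abs_norm_sub_norm_le p (-r)).trans (le_abs_self _))
  unfold energyGain
  nlinarith [norm_nonneg p]

lemma volume_fermiLune_le (hkK : k ≤ K) (hK : 0 ≤ K) :
    volume (fermiLune k p) ≤ ENNReal.ofReal (4 / 3 * π * K ^ 3) := by
  calc volume (fermiLune k p)
    _ ≤ volume (Metric.closedBall (0 : E3) K) :=
      measure_mono fun r hr ↦ mem_closedBall_zero_iff.2 (hr.1.trans hkK)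
    _ = _ := by
      rw [EuclideanSpace.volume_closedBall_fin_three, ← ENNReal.ofReal_pow hK,
        ← ENNReal.ofReal_mul (by positivity)]
      ring_nf

section Axis

variable {P : ℝ}

/-- The vector `(P, 0, 0)`, to which every momentum of norm `P` can be rotated. -/
noncomputable def axisVector (P : ℝ) : E3 := WithLp.toLp 2 (Fin.cons P 0)

lemma norm_axisVector (hP : 0 ≤ P) : ‖axisVector P‖ = P := by
  rw [← sq_eq_sq₀ (norm_nonneg _) hP, axisVector, norm_sq_toLp_cons]
  simp

lemma norm_sq_toLp_cons_add_axisVector (P u : ℝ) (w : EuclideanSpace ℝ (Fin 2)) :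
    ‖WithLp.toLp 2 (Fin.cons u w.ofLp) + axisVector P‖ ^ 2 = (u + P) ^ 2 + ‖w‖ ^ 2 := by
  have hadd : WithLp.toLp 2 (Fin.cons u w.ofLp) + axisVector P =
      WithLp.toLp 2 (Fin.cons (u + P) w.ofLp) := by
    ext i
    refine Fin.cases ?_ (fun j ↦ ?_) i <;> simp [axisVector]
  rw [hadd, norm_sq_toLp_cons]

lemma energyGain_axisVector (P u : ℝ) (w : EuclideanSpace ℝ (Fin 2)) :
    energyGain (axisVector P) (WithLp.toLp 2 (Fin.cons u w.ofLp)) = P ^ 2 + 2 * P * u := by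
  rw [energyGain, norm_sq_toLp_cons_add_axisVector, norm_sq_toLp_cons]
  ring

lemma toLp_cons_mem_fermiLune_axisVector (hk : 0 ≤ k) (P u : ℝ) (w : EuclideanSpace ℝ (Fin 2)) :
    WithLp.toLp 2 (Fin.cons u w.ofLp) ∈ fermiLune k (axisVector P) ↔
      ‖w‖ ^ 2 ≤ k ^ 2 - u ^ 2 ∧ k ^ 2 - u ^ 2 - (P ^ 2 + 2 * P * u) < ‖w‖ ^ 2 := by
  rw [fermiLune, Set.mem_ofPred_eq, ← sq_le_sq₀ (norm_nonneg _) hk,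
    ← sq_lt_sq₀ hk (norm_nonneg _), norm_sq_toLp_cons_add_axisVector, norm_sq_toLp_cons]
  refine and_congr ⟨fun h ↦ ?_, fun h ↦ ?_⟩ ⟨fun h ↦ ?_, fun h ↦ ?_⟩ <;> linarith

lemma volume_fermiLune_axisVector_slice_le (hP : 0 < P) (hk : 0 ≤ k) (u : ℝ) :
    volume {w : EuclideanSpace ℝ (Fin 2) |
        WithLp.toLp 2 (Fin.cons u w.ofLp) ∈ fermiLune k (axisVector P)} ≤
      (Set.Ioc (-P ^ 2 / (2 * P)) k).indicator
        (fun u ↦ ENNReal.ofReal (π * (P ^ 2 + 2 * P * u))) u := by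
  simp only [toLp_cons_mem_fermiLune_axisVector hk]
  by_cases hu : u ∈ Set.Ioc (-P ^ 2 / (2 * P)) k
  · rw [Set.indicator_of_mem hu]
    have := (div_lt_iff₀' (by positivity)).1 hu.1
    exact volume_annulus_fin_two_le _ (by linarith)
  · refine le_of_eq_of_le ?_ zero_le
    convert measure_empty (μ := volume (α := EuclideanSpace ℝ (Fin 2)))
    refine Set.eq_empty_of_forall_notMem fun w ⟨hw, hw'⟩ ↦ hu ⟨?_, ?_⟩
    · rw [div_lt_iff₀' (by positivity)]
      linarith
    · nlinarith [sq_nonneg ‖w‖]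

-- On the slice `r = (u, w)` the energy gain `x = P² + 2 P u` is constant and the lune is an annulus
-- of area at most `π x`, which weakens the singularity `x^{-3/2}` to the integrable `x^{-1/2}`.
lemma lintegral_slice_fermiLune_axisVector_le (hP : 0 < P) (hk : 0 ≤ k) (u : ℝ) :
    ∫⁻ w : EuclideanSpace ℝ (Fin 2), (fermiLune k (axisVector P)).indicator
        (fun r ↦ ENNReal.ofReal (√(energyGain (axisVector P) r) ^ 3)⁻¹)
        (WithLp.toLp 2 (Fin.cons u w.ofLp)) ≤
      (Set.Ioc (-P ^ 2 / (2 * P)) k).indicator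
        (fun u ↦ ENNReal.ofReal π * ENNReal.ofReal (√(P ^ 2 + 2 * P * u))⁻¹) u := by
  set x := P ^ 2 + 2 * P * u with hx
  calc _ = ∫⁻ w, {w : EuclideanSpace ℝ (Fin 2) |
          WithLp.toLp 2 (Fin.cons u w.ofLp) ∈ fermiLune k (axisVector P)}.indicator
        (fun _ ↦ ENNReal.ofReal (√x ^ 3)⁻¹) w := by
        refine lintegral_congr fun w ↦ ?_
        simp only [Set.indicator, Set.mem_ofPred_eq, energyGain_axisVector, hx]
    _ ≤ ENNReal.ofReal (√x ^ 3)⁻¹ * _ := (lintegral_indicator_const_le _ _).trans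
      (mul_le_mul_right (volume_fermiLune_axisVector_slice_le hP hk u) _)
    _ ≤ _ := by
      by_cases hu : u ∈ Set.Ioc (-P ^ 2 / (2 * P)) k
      · have hx_pos : 0 < x := by linarith [(div_lt_iff₀' (by positivity)).1 hu.1]
        have hcancel : (√x ^ 3)⁻¹ * (π * x) = π * (√x)⁻¹ := by
          nth_rw 2 [← sq_sqrt hx_pos.le]
          field_simp
        simp only [Set.indicator_of_mem hu, ← hx]
        rw [← ENNReal.ofReal_mul (by positivity), ← ENNReal.ofReal_mul pi_nonneg, hcancel]
      · simp only [Set.indicator_of_notMem hu, mul_zero, le_refl]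

lemma setLIntegral_fermiLune_axisVector_le (hP : 0 < P) (hk : 0 ≤ k) :
    ∫⁻ r in fermiLune k (axisVector P),
        ENNReal.ofReal (√(energyGain (axisVector P) r) ^ 3)⁻¹ ≤
      ENNReal.ofReal (π * √(1 + 2 * k / P)) := by
  have hsqrt : 2 * √(P ^ 2 + 2 * P * k) / (2 * P) = √(1 + 2 * k / P) := by
    rw [mul_div_mul_left _ _ two_ne_zero, eq_comm, eq_div_iff hP.ne', ← sqrt_sq hP.le,
      ← sqrt_mul (by positivity), sqrt_sq hP.le]
    congr 1
    field_simp
  calc _ = _ := by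
        rw [← lintegral_indicator measurableSet_fermiLune,
          lintegral_euclideanSpace_fin_succ
            (Measurable.indicator (by fun_prop) measurableSet_fermiLune)]
    _ ≤ _ := lintegral_mono (lintegral_slice_fermiLune_axisVector_le hP hk)
    _ = _ := by
      rw [lintegral_indicator measurableSet_Ioc, lintegral_const_mul _ (by fun_prop),
        setLIntegral_Ioc_inv_sqrt_affine (by positivity)
          ((div_nonpos_of_nonpos_of_nonneg (by nlinarith) (by positivity)).trans hk), hsqrt,
        ENNReal.ofReal_mul pi_nonneg]

end Axis

lemma setLIntegral_fermiLune_le (hp : p ≠ 0) (hk : 0 ≤ k) :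
    ∫⁻ r in fermiLune k p, ENNReal.ofReal (√(energyGain p r) ^ 3)⁻¹ ≤
      ENNReal.ofReal (π * √(1 + 2 * k / ‖p‖)) := by
  set e := axisVector ‖p‖
  let U : E3 ≃ₗᵢ[ℝ] E3 := (Submodule.span ℝ {e - p})ᗮ.reflection
  have hUe : U e = p := Submodule.reflection_sub (norm_axisVector (norm_nonneg p))
  have hnorm (r : E3) : ‖U r + p‖ = ‖r + e‖ := by rw [← hUe, ← map_add, U.norm_map]
  have hlune : U ⁻¹' fermiLune k p = fermiLune k e := by
    ext r
    simp [fermiLune, hnorm]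
  have hgain (r : E3) : energyGain p (U r) = energyGain e r := by
    simp [energyGain, hnorm]
  rw [← U.measurePreserving.setLIntegral_comp_preimage measurableSet_fermiLune
    (by fun_prop), hlune]
  simp only [hgain]
  exact setLIntegral_fermiLune_axisVector_le (norm_pos_iff.2 hp) hk

end FermiLune

section Radial3

lemma setLIntegral_ball_inv_norm {R : ℝ} (hR : 0 ≤ R) :
    ∫⁻ p in Metric.ball (0 : E3) R, ENNReal.ofReal ‖p‖⁻¹ = ENNReal.ofReal (2 * π * R ^ 2) := by
  have h := setLIntegral_ball_norm_rpow (volume : Measure E3) (s := -1) (by norm_num) hR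
  simp only [rpow_neg_one] at h
  rw [h, EuclideanSpace.volume_ball_fin_three]
  norm_num
  rw [← ENNReal.ofReal_ofNat 3, ← ENNReal.ofReal_mul (by norm_num),
    ← ENNReal.ofReal_mul (by positivity)]
  ring_nf

lemma setLIntegral_le_norm_inv_pow {R : ℝ} (hR : 0 < R) (n : ℕ) :
    ∫⁻ p in {p : E3 | R ≤ ‖p‖}, ENNReal.ofReal (‖p‖ ^ (n + 4))⁻¹ =
      ENNReal.ofReal (4 * π / ((n + 1) * R ^ (n + 1))) := by
  have h := setLIntegral_le_norm_rpow (volume : Measure E3) (s := -(n + 4 : ℕ))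
    (by simp; linarith) hR
  simp only [rpow_neg (norm_nonneg _), rpow_natCast] at h
  have hexp : (3 : ℝ) + -(n + 4 : ℕ) = -(n + 1 : ℕ) := by
    push_cast
    ring
  simp only [finrank_euclideanSpace_fin, EuclideanSpace.volume_ball_fin_three, Nat.cast_ofNat, hexp,
    rpow_neg hR.le, rpow_natCast, neg_div_neg_eq, ENNReal.ofReal_one, one_pow, one_mul] at h
  rw [h, ← ENNReal.ofReal_ofNat 3, ← ENNReal.ofReal_mul (by norm_num),
    ← ENNReal.ofReal_mul (by positivity)]
  push_cast
  field_simp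

end Radial3

section Pair

/-- The domain of integration: triples `(p, r, r')` such that the transfer of the momentum `p`
from `r'` to `r` moves both particles out of their Fermi balls. -/
def pairDomain (k₁ k₂ : ℝ) : Set (E3 × E3 × E3) :=
  {q | q.2.1 ∈ fermiLune k₁ q.1 ∧ q.2.2 ∈ fermiLune k₂ (-q.1)}

/-- The energy `E(p, r, r')` of the pair excitation `(p, r, r')`. -/
noncomputable def pairEnergy (q : E3 × E3 × E3) : ℝ :=
  energyGain q.1 q.2.1 + energyGain (-q.1) q.2.2

variable {k₁ k₂ K T : ℝ} {q : E3 × E3 × E3}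

@[fun_prop]
lemma measurable_pairEnergy : Measurable pairEnergy := by
  unfold pairEnergy energyGain
  fun_prop

lemma measurableSet_pairDomain : MeasurableSet (pairDomain k₁ k₂) := by
  unfold pairDomain fermiLune
  measurability

lemma preimage_pairDomain (p : E3) :
    Prod.mk p ⁻¹' pairDomain k₁ k₂ = fermiLune k₁ p ×ˢ fermiLune k₂ (-p) := rfl

lemma pairEnergy_pos (hq : q ∈ pairDomain k₁ k₂) : 0 < pairEnergy q :=
  add_pos (energyGain_pos hq.1) (energyGain_pos hq.2)

lemma pairEnergy_le (h₁ : k₁ ≤ K) (h₂ : k₂ ≤ K) (hq : q ∈ pairDomain k₁ k₂) :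
    pairEnergy q ≤ 2 * (‖q.1‖ ^ 2 + 2 * ‖q.1‖ * K) := by
  have hr := energyGain_le (p := q.1) (hq.1.1.trans h₁)
  have hr' := energyGain_le (p := -q.1) (hq.2.1.trans h₂)
  rw [norm_neg] at hr'
  unfold pairEnergy
  linarith

lemma norm_sq_le_pairEnergy (h₁ : k₁ ≤ K) (h₂ : k₂ ≤ K) (hq : q ∈ pairDomain k₁ k₂)
    (hK : 4 * K ≤ ‖q.1‖) : ‖q.1‖ ^ 2 ≤ pairEnergy q := by
  have hr := le_energyGain (p := q.1) (hq.1.1.trans h₁)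
  have hr' := le_energyGain (p := -q.1) (hq.2.1.trans h₂)
  rw [norm_neg] at hr'
  unfold pairEnergy
  nlinarith [norm_nonneg q.1]

lemma inv_add_pow_three_le {x y : ℝ} (hx : 0 < x) (hy : 0 < y) :
    ((x + y) ^ 3)⁻¹ ≤ (√x ^ 3)⁻¹ * (√y ^ 3)⁻¹ / 8 := by
  have hamgm : 2 * √x * √y ≤ x + y := by
    simpa only [sq_sqrt hx.le, sq_sqrt hy.le] using two_mul_le_add_sq √x √y
  calc ((x + y) ^ 3)⁻¹
    _ ≤ ((2 * √x * √y) ^ 3)⁻¹ := by gcongr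
    _ = _ := by
      rw [← mul_inv, div_eq_mul_inv, ← mul_inv]
      ring

lemma setLIntegral_section_inv_pairEnergy_pow_three_le (h₁ : k₁ ∈ Set.Icc 0 K)
    (h₂ : k₂ ∈ Set.Icc 0 K) {p : E3} (hp : p ≠ 0) :
    ∫⁻ y in Prod.mk p ⁻¹' pairDomain k₁ k₂, ENNReal.ofReal (pairEnergy (p, y) ^ 3)⁻¹ ≤
      ENNReal.ofReal (π ^ 2 / 8 * (1 + 2 * K * ‖p‖⁻¹)) := by
  have hK : 0 ≤ K := h₁.1.trans h₁.2
  calc ∫⁻ y in Prod.mk p ⁻¹' pairDomain k₁ k₂, ENNReal.ofReal (pairEnergy (p, y) ^ 3)⁻¹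
    _ ≤ ∫⁻ y in fermiLune k₁ p ×ˢ fermiLune k₂ (-p), ENNReal.ofReal (1 / 8) *
        (ENNReal.ofReal (√(energyGain p y.1) ^ 3)⁻¹ *
          ENNReal.ofReal (√(energyGain (-p) y.2) ^ 3)⁻¹) := by
      rw [preimage_pairDomain]
      refine setLIntegral_mono' (measurableSet_fermiLune.prod measurableSet_fermiLune)
        fun y hy ↦ ?_
      rw [← ENNReal.ofReal_mul (by positivity), ← ENNReal.ofReal_mul (by norm_num)]
      gcongr
      exact (inv_add_pow_three_le (energyGain_pos hy.1) (energyGain_pos hy.2)).trans_eq (by ring)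
    _ = ENNReal.ofReal (1 / 8) * ((∫⁻ r in fermiLune k₁ p, ENNReal.ofReal
          (√(energyGain p r) ^ 3)⁻¹) * ∫⁻ r in fermiLune k₂ (-p), ENNReal.ofReal
          (√(energyGain (-p) r) ^ 3)⁻¹) := by
      have hmeas (p : E3) : Measurable fun r ↦ ENNReal.ofReal (√(energyGain p r) ^ 3)⁻¹ := by
        fun_prop
      rw [lintegral_const_mul' _ _ ENNReal.ofReal_ne_top, Measure.volume_eq_prod,
        ← Measure.prod_restrict, lintegral_prod_mul (hmeas p).aemeasurable (hmeas _).aemeasurable]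
    _ ≤ ENNReal.ofReal (1 / 8) * (ENNReal.ofReal (π * √(1 + 2 * K / ‖p‖)) *
          ENNReal.ofReal (π * √(1 + 2 * K / ‖p‖))) := by
      gcongr
      · exact (setLIntegral_fermiLune_le hp h₁.1).trans (by
          gcongr
          exact h₁.2)
      · exact (setLIntegral_fermiLune_le (neg_ne_zero.2 hp) h₂.1).trans (by
          rw [norm_neg]
          gcongr
          exact h₂.2)
    _ = _ := by
      rw [← ENNReal.ofReal_mul (by positivity), ← ENNReal.ofReal_mul (by norm_num),
        mul_mul_mul_comm, mul_self_sqrt (by positivity)]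
      ring_nf

lemma setLIntegral_section_inv_pairEnergy_pow_le (hK : 0 ≤ K) (h₁K : k₁ ≤ K) (h₂K : k₂ ≤ K)
    {p : E3} (hp : p ≠ 0) (hKp : 4 * K ≤ ‖p‖) (n : ℕ) :
    ∫⁻ y in Prod.mk p ⁻¹' pairDomain k₁ k₂, ENNReal.ofReal (pairEnergy (p, y) ^ n)⁻¹ ≤
      ENNReal.ofReal ((4 / 3 * π * K ^ 3) ^ 2) * ENNReal.ofReal (‖p‖ ^ (2 * n))⁻¹ := by
  have := norm_pos_iff.2 hp
  set c := ENNReal.ofReal (‖p‖ ^ (2 * n))⁻¹ with hc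
  calc ∫⁻ y in Prod.mk p ⁻¹' pairDomain k₁ k₂, ENNReal.ofReal (pairEnergy (p, y) ^ n)⁻¹
    _ ≤ ∫⁻ _ in fermiLune k₁ p ×ˢ fermiLune k₂ (-p), c := by
      rw [preimage_pairDomain]
      refine setLIntegral_mono' (measurableSet_fermiLune.prod measurableSet_fermiLune)
        fun y hy ↦ ?_
      rw [hc, pow_mul]
      gcongr
      exact norm_sq_le_pairEnergy (q := (p, y)) h₁K h₂K hy hKp
    _ = c * (volume (fermiLune k₁ p) * volume (fermiLune k₂ (-p))) := by
      rw [setLIntegral_const, Measure.volume_eq_prod, Measure.prod_prod]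
    _ ≤ c * (ENNReal.ofReal (4 / 3 * π * K ^ 3) * ENNReal.ofReal (4 / 3 * π * K ^ 3)) := by
      gcongr
      · exact volume_fermiLune_le h₁K hK
      · exact volume_fermiLune_le h₂K hK
    _ = _ := by
      rw [mul_comm, ← ENNReal.ofReal_mul (by positivity), sq]

lemma setLIntegral_far_inv_pairEnergy_pow_le (hK : 0 < K) (h₁K : k₁ ≤ K) (h₂K : k₂ ≤ K)
    (hT : 4 * K ≤ T) (n : ℕ) :
    ∫⁻ q in pairDomain k₁ k₂ ∩ Prod.fst ⁻¹' {p | T ≤ ‖p‖},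
        ENNReal.ofReal (pairEnergy q ^ (n + 2))⁻¹ ≤
      ENNReal.ofReal (64 / 9 * π ^ 3 * K ^ 6 / ((2 * n + 1) * T ^ (2 * n + 1))) := by
  have hT_pos : 0 < T := by linarith
  calc ∫⁻ q in pairDomain k₁ k₂ ∩ Prod.fst ⁻¹' {p | T ≤ ‖p‖},
        ENNReal.ofReal (pairEnergy q ^ (n + 2))⁻¹
    _ = ∫⁻ p in {p | T ≤ ‖p‖}, ∫⁻ y in Prod.mk p ⁻¹' pairDomain k₁ k₂,
        ENNReal.ofReal (pairEnergy (p, y) ^ (n + 2))⁻¹ :=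
      setLIntegral_inter_fst_preimage measurableSet_pairDomain (by fun_prop)
    _ ≤ ∫⁻ p in {p : E3 | T ≤ ‖p‖}, ENNReal.ofReal ((4 / 3 * π * K ^ 3) ^ 2) *
        ENNReal.ofReal (‖p‖ ^ (2 * n + 4))⁻¹ := by
      refine setLIntegral_mono' (measurableSet_le (by fun_prop) (by fun_prop)) fun p hp ↦ ?_
      exact setLIntegral_section_inv_pairEnergy_pow_le hK.le h₁K h₂K
        (norm_pos_iff.1 (hT_pos.trans_le hp)) (hT.trans hp) (n + 2)
    _ = _ := by
      rw [lintegral_const_mul' _ _ ENNReal.ofReal_ne_top, setLIntegral_le_norm_inv_pow hT_pos,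
        ← ENNReal.ofReal_mul (by positivity)]
      push_cast
      ring_nf

lemma setLIntegral_near_inv_pairEnergy_pow_three_le (h₁ : k₁ ∈ Set.Icc 0 K) (h₂ : k₂ ∈ Set.Icc 0 K)
    {R : ℝ} (hR : 0 ≤ R) :
    ∫⁻ q in pairDomain k₁ k₂ ∩ Prod.fst ⁻¹' Metric.ball 0 R,
        ENNReal.ofReal (pairEnergy q ^ 3)⁻¹ ≤
      ENNReal.ofReal (π ^ 3 / 6 * R ^ 2 * (R + 3 * K)) := by
  have hK : 0 ≤ K := h₁.1.trans h₁.2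
  have hne : ∀ᵐ p ∂(volume.restrict (Metric.ball (0 : E3) R)), p ≠ 0 :=
    ae_restrict_of_ae (Measure.ae_ne _ 0)
  calc ∫⁻ q in pairDomain k₁ k₂ ∩ Prod.fst ⁻¹' Metric.ball 0 R,
        ENNReal.ofReal (pairEnergy q ^ 3)⁻¹
    _ = ∫⁻ p in Metric.ball 0 R, ∫⁻ y in Prod.mk p ⁻¹' pairDomain k₁ k₂,
        ENNReal.ofReal (pairEnergy (p, y) ^ 3)⁻¹ :=
      setLIntegral_inter_fst_preimage measurableSet_pairDomain (by fun_prop)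
    _ ≤ ∫⁻ p in Metric.ball (0 : E3) R, ENNReal.ofReal (π ^ 2 / 8) *
          (1 + ENNReal.ofReal (2 * K) * ENNReal.ofReal ‖p‖⁻¹) := by
      refine lintegral_mono_ae (hne.mono fun p hp ↦ ?_)
      refine (setLIntegral_section_inv_pairEnergy_pow_three_le h₁ h₂ hp).trans_eq ?_
      rw [ENNReal.ofReal_mul (by positivity), ENNReal.ofReal_add zero_le_one (by positivity),
        ENNReal.ofReal_one, ENNReal.ofReal_mul (by positivity)]
    _ = ENNReal.ofReal (π ^ 2 / 8) * (ENNReal.ofReal (4 / 3 * π * R ^ 3) +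
          ENNReal.ofReal (2 * K) * ENNReal.ofReal (2 * π * R ^ 2)) := by
      rw [lintegral_const_mul' _ _ ENNReal.ofReal_ne_top, lintegral_add_left measurable_const,
        lintegral_const_mul' _ _ ENNReal.ofReal_ne_top, setLIntegral_one,
        setLIntegral_ball_inv_norm hR, EuclideanSpace.volume_ball_fin_three,
        ← ENNReal.ofReal_pow hR, ← ENNReal.ofReal_mul (by positivity)]
      ring_nf
    _ = _ := by
      rw [← ENNReal.ofReal_mul (by positivity), ← ENNReal.ofReal_add (by positivity)
        (by positivity), ← ENNReal.ofReal_mul (by positivity)]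
      ring_nf

lemma setLIntegral_inv_pairEnergy_pow_three_le (hK : 0 < K) (h₁ : k₁ ∈ Set.Icc 0 K)
    (h₂ : k₂ ∈ Set.Icc 0 K) :
    ∫⁻ q in pairDomain k₁ k₂, ENNReal.ofReal (pairEnergy q ^ 3)⁻¹ ≤
      ENNReal.ofReal (19 * π ^ 3 * K ^ 3) := by
  have hcompl : (Prod.fst ⁻¹' Metric.ball 0 (4 * K))ᶜ =
      (Prod.fst ⁻¹' {p | 4 * K ≤ ‖p‖} : Set (E3 × E3 × E3)) := by
    ext q
    simp
  have hfar := setLIntegral_far_inv_pairEnergy_pow_le hK h₁.2 h₂.2 le_rfl 1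
  rw [← lintegral_inter_add_sdiff _ _ (measurable_fst measurableSet_ball), Set.sdiff_eq, hcompl]
  refine (add_le_add (setLIntegral_near_inv_pairEnergy_pow_three_le h₁ h₂ (by positivity))
    hfar).trans ?_
  rw [← ENNReal.ofReal_add (by positivity) (by positivity)]
  refine ENNReal.ofReal_le_ofReal ?_
  push_cast
  calc π ^ 3 / 6 * (4 * K) ^ 2 * (4 * K + 3 * K) +
        64 / 9 * π ^ 3 * K ^ 6 / ((2 * 1 + 1) * (4 * K) ^ (2 * 1 + 1))
    _ = 505 / 27 * (π ^ 3 * K ^ 3) := by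
      field_simp
      ring
    _ ≤ 19 * (π ^ 3 * K ^ 3) := by
      gcongr
      norm_num
    _ = _ := by ring

lemma inv_pairEnergy_sq_le (h₁ : k₁ ≤ K) (h₂ : k₂ ≤ K) (hq : q ∈ pairDomain k₁ k₂)
    (hqK : ‖q.1‖ ≤ 4 * K) : (pairEnergy q ^ 2)⁻¹ ≤ 48 * K ^ 2 * (pairEnergy q ^ 3)⁻¹ := by
  have hpos := pairEnergy_pos hq
  have hle : pairEnergy q ≤ 48 * K ^ 2 := by
    nlinarith [pairEnergy_le h₁ h₂ hq, norm_nonneg q.1]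
  calc (pairEnergy q ^ 2)⁻¹ = pairEnergy q * (pairEnergy q ^ 3)⁻¹ := by field_simp
    _ ≤ _ := by gcongr

lemma integrableOn_inv_pairEnergy_sq (hK : 0 < K) (h₁ : k₁ ∈ Set.Icc 0 K)
    (h₂ : k₂ ∈ Set.Icc 0 K) :
    IntegrableOn (fun q ↦ (pairEnergy q ^ 2)⁻¹) (pairDomain k₁ k₂) := by
  have hmeas (n : ℕ) : Measurable fun q ↦ (pairEnergy q ^ n)⁻¹ := by fun_prop
  have hcube : IntegrableOn (fun q ↦ (pairEnergy q ^ 3)⁻¹) (pairDomain k₁ k₂) := by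
    refine (lintegral_ofReal_ne_top_iff_integrable (hmeas 3).aestronglyMeasurable ?_).1
      ((setLIntegral_inv_pairEnergy_pow_three_le hK h₁ h₂).trans_lt ENNReal.ofReal_lt_top).ne
    filter_upwards [ae_restrict_mem measurableSet_pairDomain] with q hq
    have := pairEnergy_pos hq
    positivity
  have hnear : IntegrableOn (fun q ↦ (pairEnergy q ^ 2)⁻¹)
      (pairDomain k₁ k₂ ∩ {q | ‖q.1‖ < 4 * K}) := by
    refine ((hcube.mono_set Set.inter_subset_left).const_mul (48 * K ^ 2)).mono'
      (hmeas 2).aestronglyMeasurable ?_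
    filter_upwards [ae_restrict_mem (measurableSet_pairDomain.inter
      (measurableSet_lt (by fun_prop) (by fun_prop)))] with q hq
    rw [norm_of_nonneg (by positivity)]
    exact inv_pairEnergy_sq_le h₁.2 h₂.2 hq.1 hq.2.le
  have hfar : IntegrableOn (fun q ↦ (pairEnergy q ^ 2)⁻¹)
      (pairDomain k₁ k₂ ∩ Prod.fst ⁻¹' {p | 4 * K ≤ ‖p‖}) :=
    (lintegral_ofReal_ne_top_iff_integrable (hmeas 2).aestronglyMeasurable
      (.of_forall fun q ↦ by positivity)).1 ((setLIntegral_far_inv_pairEnergy_pow_le hK h₁.2 h₂.2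
        le_rfl 0).trans_lt ENNReal.ofReal_lt_top).ne
  refine (hnear.union hfar).mono_set fun q hq ↦ ?_
  exact (lt_or_ge ‖q.1‖ (4 * K)).imp (⟨hq, ·⟩) (⟨hq, ·⟩)

section Regularization

/-- The difference `E⁻² - χ(p)² / (E + 2ε)²` between Belyakov's kernel and the regularized one. -/
noncomputable def kernelDefect (ε : ℝ) (χ : E3 → ℝ) (q : E3 × E3 × E3) : ℝ :=
  (pairEnergy q ^ 2)⁻¹ - χ q.1 ^ 2 / (pairEnergy q + 2 * ε) ^ 2

variable {ε : ℝ} {χ : E3 → ℝ}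

lemma sq_div_add_sq_le {x c : ℝ} (hx : 0 < x) (hε : 0 ≤ ε) (hc : |c| ≤ 1) :
    c ^ 2 / (x + 2 * ε) ^ 2 ≤ (x ^ 2)⁻¹ := by
  rw [← one_div]
  gcongr
  · exact (sq_le_one_iff_abs_le_one c).2 hc
  · linarith

lemma inv_sq_sub_inv_add_sq_le {x : ℝ} (hx : 0 < x) (hε : 0 ≤ ε) :
    (x ^ 2)⁻¹ - ((x + 2 * ε) ^ 2)⁻¹ ≤ 4 * ε * (x ^ 3)⁻¹ := by
  have hinv : x⁻¹ - (x + 2 * ε)⁻¹ ≤ 2 * ε * (x ^ 2)⁻¹ := by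
    rw [inv_sub_inv (by positivity) (by positivity), add_sub_cancel_left, ← div_eq_mul_inv, sq]
    gcongr
    linarith
  have hmono : (x + 2 * ε)⁻¹ ≤ x⁻¹ := by
    gcongr
    linarith
  calc (x ^ 2)⁻¹ - ((x + 2 * ε) ^ 2)⁻¹
    _ = (x⁻¹ + (x + 2 * ε)⁻¹) * (x⁻¹ - (x + 2 * ε)⁻¹) := by rw [← sq_sub_sq, inv_pow, inv_pow]
    _ ≤ (x⁻¹ + x⁻¹) * (2 * ε * (x ^ 2)⁻¹) := by
      gcongr
    _ = _ := by ring

lemma abs_kernelDefect_le (hε : 0 ≤ ε) (hχ : ∀ p, |χ p| ≤ 1) (hq : q ∈ pairDomain k₁ k₂) :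
    |kernelDefect ε χ q| ≤ (pairEnergy q ^ 2)⁻¹ := by
  rw [kernelDefect, abs_of_nonneg
    (sub_nonneg.2 (sq_div_add_sq_le (pairEnergy_pos hq) hε (hχ q.1))), sub_le_self_iff]
  positivity

lemma abs_kernelDefect_le_of_eq_one (hε : 0 ≤ ε) (hq : q ∈ pairDomain k₁ k₂) (hχ : χ q.1 = 1) :
    |kernelDefect ε χ q| ≤ 4 * ε * (pairEnergy q ^ 3)⁻¹ := by
  have hnonneg := sq_div_add_sq_le (c := 1) (pairEnergy_pos hq) hε (by simp)
  have hle := inv_sq_sub_inv_add_sq_le (pairEnergy_pos hq) hε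
  rw [one_pow, one_div] at hnonneg
  rwa [kernelDefect, hχ, one_pow, one_div, abs_of_nonneg (sub_nonneg.2 hnonneg)]

lemma integrableOn_cutoff_sq_div (hK : 0 < K) (h₁ : k₁ ∈ Set.Icc 0 K) (h₂ : k₂ ∈ Set.Icc 0 K)
    (hε : 0 ≤ ε) (hχm : AEStronglyMeasurable χ) (hχ : ∀ p, |χ p| ≤ 1) :
    IntegrableOn (fun q ↦ χ q.1 ^ 2 / (pairEnergy q + 2 * ε) ^ 2) (pairDomain k₁ k₂) := by
  refine (integrableOn_inv_pairEnergy_sq hK h₁ h₂).mono' ?_ ?_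
  · have hχ_fst : AEStronglyMeasurable (fun q : E3 × E3 × E3 ↦ χ q.1) := hχm.comp_fst
    have hden : AEMeasurable (fun q ↦ (pairEnergy q + 2 * ε) ^ 2) := by fun_prop
    exact ((hχ_fst.aemeasurable.pow_const 2).div hden).aestronglyMeasurable.restrict
  · filter_upwards [ae_restrict_mem measurableSet_pairDomain] with q hq
    rw [norm_of_nonneg (by positivity)]
    exact sq_div_add_sq_le (pairEnergy_pos hq) hε (hχ q.1)

lemma setLIntegral_enorm_kernelDefect_le (hK : 0 < K) (h₁ : k₁ ∈ Set.Icc 0 K)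
    (h₂ : k₂ ∈ Set.Icc 0 K) (hT : 4 * K ≤ T) (hε : 0 ≤ ε) (hχ : ∀ p, |χ p| ≤ 1)
    (hχ_one : ∀ p, ‖p‖ ≤ T → χ p = 1) :
    ∫⁻ q in pairDomain k₁ k₂, ‖kernelDefect ε χ q‖ₑ ≤
      ENNReal.ofReal (76 * π ^ 3 * K ^ 3 * ε + 64 / 9 * π ^ 3 * K ^ 6 / T) := by
  have hT_pos : 0 < T := by linarith
  have hmeas : MeasurableSet (Prod.fst ⁻¹' {p | T ≤ ‖p‖} : Set (E3 × E3 × E3)) :=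
    measurable_fst (measurableSet_le measurable_const measurable_norm)
  have hfar : ∫⁻ q in pairDomain k₁ k₂ ∩ Prod.fst ⁻¹' {p | T ≤ ‖p‖}, ‖kernelDefect ε χ q‖ₑ ≤
      ENNReal.ofReal (64 / 9 * π ^ 3 * K ^ 6 / T) := by
    refine (setLIntegral_mono' (measurableSet_pairDomain.inter hmeas) fun q hq ↦ ?_).trans
      (by simpa using setLIntegral_far_inv_pairEnergy_pow_le hK h₁.2 h₂.2 hT 0)
    rw [← ofReal_norm]
    exact ENNReal.ofReal_le_ofReal (abs_kernelDefect_le hε hχ hq.1)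
  have hnear : ∫⁻ q in pairDomain k₁ k₂ \ Prod.fst ⁻¹' {p | T ≤ ‖p‖}, ‖kernelDefect ε χ q‖ₑ ≤
      ENNReal.ofReal (4 * ε) * ENNReal.ofReal (19 * π ^ 3 * K ^ 3) := by
    calc ∫⁻ q in pairDomain k₁ k₂ \ Prod.fst ⁻¹' {p | T ≤ ‖p‖}, ‖kernelDefect ε χ q‖ₑ
      _ ≤ ∫⁻ q in pairDomain k₁ k₂ \ Prod.fst ⁻¹' {p | T ≤ ‖p‖},
          ENNReal.ofReal (4 * ε) * ENNReal.ofReal (pairEnergy q ^ 3)⁻¹ := by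
        refine setLIntegral_mono' (measurableSet_pairDomain.diff hmeas) fun q hq ↦ ?_
        rw [← ofReal_norm, ← ENNReal.ofReal_mul (by positivity)]
        exact ENNReal.ofReal_le_ofReal
          (abs_kernelDefect_le_of_eq_one hε hq.1 (hχ_one _ (not_le.1 hq.2).le))
      _ ≤ ∫⁻ q in pairDomain k₁ k₂,
          ENNReal.ofReal (4 * ε) * ENNReal.ofReal (pairEnergy q ^ 3)⁻¹ :=
        lintegral_mono_set Set.sdiff_subset
      _ ≤ _ := by
        rw [lintegral_const_mul' _ _ ENNReal.ofReal_ne_top]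
        gcongr
        exact setLIntegral_inv_pairEnergy_pow_three_le hK h₁ h₂
  rw [← lintegral_inter_add_sdiff _ _ hmeas, add_comm, ENNReal.ofReal_add (by positivity)
    (by positivity)]
  refine add_le_add (hnear.trans_eq ?_) hfar
  rw [← ENNReal.ofReal_mul (by positivity)]
  ring_nf

end Regularization

lemma eLpNorm_top_comp_le {α β F : Type*} [MeasurableSpace α] [MeasurableSpace β]
    [NormedAddCommGroup F] {μ : Measure α} {ν : Measure β} {φ : α → β} {f : β → F}
    (hφ : Measure.QuasiMeasurePreserving φ μ ν) : eLpNorm (f ∘ φ) ⊤ μ ≤ eLpNorm f ⊤ ν := by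
  simp only [eLpNorm_exponent_top]
  exact eLpNormEssSup_le_of_ae_enorm_bound (hφ.ae (ae_le_eLpNormEssSup (f := f)))

lemma memLp_top_comp {α β F : Type*} [MeasurableSpace α] [MeasurableSpace β]
    [NormedAddCommGroup F] {μ : Measure α} {ν : Measure β} {φ : α → β} {f : β → F}
    (hφ : Measure.QuasiMeasurePreserving φ μ ν) (hf : MemLp f ⊤ ν) : MemLp (f ∘ φ) ⊤ μ :=
  ⟨hf.1.comp_quasiMeasurePreserving hφ, (eLpNorm_top_comp_le hφ).trans_lt hf.2⟩

lemma enorm_integral_mul_le_eLpNorm_top_mul {α : Type*} [MeasurableSpace α] {μ : Measure α}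
    {f g : α → ℝ} (hg : AEStronglyMeasurable g μ) :
    ‖∫ x, f x * g x ∂μ‖ₑ ≤ eLpNorm f ⊤ μ * ∫⁻ x, ‖g x‖ₑ ∂μ := by
  calc ‖∫ x, f x * g x ∂μ‖ₑ
    _ ≤ eLpNorm (fun x ↦ f x * g x) 1 μ := by
      rw [eLpNorm_one_eq_lintegral_enorm]
      exact enorm_integral_le_lintegral_enorm _
    _ ≤ _ := by
      rw [← eLpNorm_one_eq_lintegral_enorm]
      exact eLpNorm_smul_le_eLpNorm_top_mul_eLpNorm 1 hg f

section PairSum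

/-- The sum `W(p, r, r')` of the values of `G` at the momenta created or annihilated by a pair
excitation. -/
def pairSum (G : E3 → ℝ) (q : E3 × E3 × E3) : ℝ :=
  G (q.2.1 + q.1) + G (-q.2.1) + G (q.2.2 - q.1) + G (-q.2.2)

/-- The momenta `r + p`, `-r`, `r' - p`, `-r'` of the particles and holes of the pair excitation
`(p, r, r')`, as linear maps of `(p, r, r')`. -/
noncomputable def pairMomentum : Fin 4 → E3 × E3 × E3 →L[ℝ] E3 :=
  let p : E3 × E3 × E3 →L[ℝ] E3 := .fst ℝ E3 (E3 × E3)
  let r : E3 × E3 × E3 →L[ℝ] E3 := .fst ℝ E3 E3 ∘L .snd ℝ E3 (E3 × E3)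
  let r' : E3 × E3 × E3 →L[ℝ] E3 := .snd ℝ E3 E3 ∘L .snd ℝ E3 (E3 × E3)
  ![r + p, -r, r' - p, -r']

lemma pairMomentum_surjective (i : Fin 4) : Function.Surjective (pairMomentum i) := by
  intro x
  fin_cases i
  · exact ⟨(x, 0, 0), by simp [pairMomentum]⟩
  · exact ⟨(0, -x, 0), by simp [pairMomentum]⟩
  · exact ⟨(0, 0, x), by simp [pairMomentum]⟩
  · exact ⟨(0, 0, -x), by simp [pairMomentum]⟩

lemma quasiMeasurePreserving_pairMomentum (i : Fin 4) :
    Measure.QuasiMeasurePreserving (pairMomentum i) :=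
  have : (volume : Measure (E3 × E3 × E3)).IsAddHaarMeasure :=
    have : (volume : Measure (E3 × E3)).IsAddHaarMeasure :=
      Measure.prod.instIsAddHaarMeasure volume volume
    Measure.prod.instIsAddHaarMeasure volume volume
  quasiMeasurePreserving_of_surjective _ (pairMomentum_surjective i) volume volume

lemma pairSum_eq_sum_comp_pairMomentum (G : E3 → ℝ) :
    pairSum G = ∑ i, G ∘ pairMomentum i := by
  ext q
  simp [pairSum, pairMomentum, Fin.sum_univ_four]

variable {G : E3 → ℝ}

lemma memLp_top_pairSum (hG : MemLp G ⊤) : MemLp (pairSum G) ⊤ := by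
  rw [pairSum_eq_sum_comp_pairMomentum]
  exact memLp_finsetSum' _ fun i _ ↦ memLp_top_comp (quasiMeasurePreserving_pairMomentum i) hG

lemma eLpNorm_top_pairSum_le (hG : AEStronglyMeasurable G) :
    eLpNorm (pairSum G) ⊤ ≤ 4 * eLpNorm G ⊤ := by
  have hsum : eLpNorm (∑ i, G ∘ pairMomentum i) ⊤ ≤ ∑ i, eLpNorm (G ∘ pairMomentum i) ⊤ :=
    eLpNorm_sum_le (fun i _ ↦
      hG.comp_quasiMeasurePreserving (quasiMeasurePreserving_pairMomentum i)) le_top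
  have hle (i : Fin 4) : eLpNorm (G ∘ pairMomentum i) ⊤ ≤ eLpNorm G ⊤ :=
    eLpNorm_top_comp_le (quasiMeasurePreserving_pairMomentum i)
  rw [pairSum_eq_sum_comp_pairMomentum]
  refine hsum.trans ((Finset.sum_le_sum fun i _ ↦ hle i).trans_eq ?_)
  simp

end PairSum

section Constants

/-- The iterated integral `∫ dp ∫_{|r| ≤ k₁ < |r+p|} dr ∫_{|r'| ≤ k₂ < |r'-p|} dr' F(p, r, r')`. -/
noncomputable def iteratedPairIntegral (k₁ k₂ : ℝ) (F : E3 × E3 × E3 → ℝ) : ℝ :=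
  ∫ p, ∫ r in fermiLune k₁ p, ∫ r' in fermiLune k₂ (-p), F (p, r, r')

/-- Belyakov's constant `n^{Bel}`. -/
noncomputable def belyakovConstant (a k₁ k₂ : ℝ) (G : E3 → ℝ) : ℝ :=
  a ^ 2 / π ^ 4 * iteratedPairIntegral k₁ k₂ fun q ↦ pairSum G q / pairEnergy q ^ 2

/-- The constant `𝒞`, with scattering regularization `ε` and low-momentum cutoff `χ`. -/
noncomputable def regularizedConstant (a k₁ k₂ ε : ℝ) (χ G : E3 → ℝ) : ℝ :=
  a ^ 2 / π ^ 4 * iteratedPairIntegral k₁ k₂ fun q ↦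
    pairSum G q * χ q.1 ^ 2 / (pairEnergy q + 2 * ε) ^ 2

lemma iteratedPairIntegral_eq_setIntegral {F : E3 × E3 × E3 → ℝ}
    (hF : IntegrableOn F (pairDomain k₁ k₂)) :
    iteratedPairIntegral k₁ k₂ F = ∫ q in pairDomain k₁ k₂, F q := by
  rw [Measure.volume_eq_prod] at hF ⊢
  rw [setIntegral_eq_integral_section measurableSet_pairDomain hF, iteratedPairIntegral]
  refine integral_congr_ae ((ae_integrableOn_section measurableSet_pairDomain hF).mono
    fun p hp ↦ ?_)
  rw [preimage_pairDomain, Measure.volume_eq_prod] at hp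
  simp only [preimage_pairDomain]
  rw [Measure.volume_eq_prod, setIntegral_prod _ hp]

variable {a ε : ℝ} {χ G : E3 → ℝ}

lemma belyakovConstant_sub_regularizedConstant (hK : 0 < K) (h₁ : k₁ ∈ Set.Icc 0 K)
    (h₂ : k₂ ∈ Set.Icc 0 K) (hε : 0 ≤ ε) (hχm : AEStronglyMeasurable χ) (hχ : ∀ p, |χ p| ≤ 1)
    (hG : MemLp G ⊤) :
    belyakovConstant a k₁ k₂ G - regularizedConstant a k₁ k₂ ε χ G =
      a ^ 2 / π ^ 4 * ∫ q in pairDomain k₁ k₂, pairSum G q * kernelDefect ε χ q := by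
  have hmul {g : E3 × E3 × E3 → ℝ} (hg : IntegrableOn g (pairDomain k₁ k₂)) :
      IntegrableOn (fun q ↦ pairSum G q * g q) (pairDomain k₁ k₂) :=
    (memLp_top_pairSum hG).restrict _ |>.integrable_mul (memLp_one_iff_integrable.2 hg.integrable)
  have hbel := hmul (integrableOn_inv_pairEnergy_sq hK h₁ h₂)
  have hreg := hmul (integrableOn_cutoff_sq_div hK h₁ h₂ hε hχm hχ)
  simp only [belyakovConstant, regularizedConstant, kernelDefect, div_eq_mul_inv (pairSum G _),
    mul_div_assoc (pairSum G _), mul_sub]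
  rw [iteratedPairIntegral_eq_setIntegral hbel, iteratedPairIntegral_eq_setIntegral hreg,
    integral_sub hbel hreg, mul_sub]

lemma enorm_belyakovConstant_sub_regularizedConstant_le (hK : 0 < K) (h₁ : k₁ ∈ Set.Icc 0 K)
    (h₂ : k₂ ∈ Set.Icc 0 K) (hT : 4 * K ≤ T) (hε : 0 ≤ ε) (hχm : AEStronglyMeasurable χ)
    (hχ : ∀ p, |χ p| ≤ 1) (hχ_one : ∀ p, ‖p‖ ≤ T → χ p = 1) (hG : MemLp G ⊤) :
    ‖belyakovConstant a k₁ k₂ G - regularizedConstant a k₁ k₂ ε χ G‖ₑ ≤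
      ENNReal.ofReal (4 * a ^ 2 / π * (76 * K ^ 3 * ε + 64 / 9 * K ^ 6 / T)) *
        eLpNorm G ⊤ := by
  have hT_pos : 0 < T := by linarith
  have hdefect : AEStronglyMeasurable (kernelDefect ε χ) (volume.restrict (pairDomain k₁ k₂)) :=
    ((integrableOn_inv_pairEnergy_sq hK h₁ h₂).sub
      (integrableOn_cutoff_sq_div hK h₁ h₂ hε hχm hχ)).aestronglyMeasurable
  rw [belyakovConstant_sub_regularizedConstant hK h₁ h₂ hε hχm hχ hG, enorm_mul,
    enorm_of_nonneg (by positivity)]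
  calc ENNReal.ofReal (a ^ 2 / π ^ 4) *
        ‖∫ q in pairDomain k₁ k₂, pairSum G q * kernelDefect ε χ q‖ₑ
    _ ≤ ENNReal.ofReal (a ^ 2 / π ^ 4) * (4 * eLpNorm G ⊤ *
          ENNReal.ofReal (76 * π ^ 3 * K ^ 3 * ε + 64 / 9 * π ^ 3 * K ^ 6 / T)) := by
      gcongr
      refine (enorm_integral_mul_le_eLpNorm_top_mul hdefect).trans ?_
      gcongr
      · exact (eLpNorm_restrict_le _ _ _ _).trans (eLpNorm_top_pairSum_le hG.1)
      · exact setLIntegral_enorm_kernelDefect_le hK h₁ h₂ hT hε hχ hχ_one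
    _ = ENNReal.ofReal (a ^ 2 / π ^ 4 * 4 *
          (76 * π ^ 3 * K ^ 3 * ε + 64 / 9 * π ^ 3 * K ^ 6 / T)) * eLpNorm G ⊤ := by
      rw [ENNReal.ofReal_mul (by positivity), ENNReal.ofReal_mul (by positivity),
        ENNReal.ofReal_ofNat]
      ring
    _ = _ := by
      congr 2
      field_simp

end Constants

end Pair

section Density

variable {ρ C₀ : ℝ}

lemma fermiMomentum_le_cutoff (hC₀ : 0 < C₀) (hρ : 0 < ρ) (hρ₀ : ρ ≤ (1 + C₀) ^ (-9 : ℝ)) :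
    C₀ * ρ ^ ((1 : ℝ) / 3) ≤ ρ ^ ((2 : ℝ) / 9) := by
  have hninth : ρ ^ ((1 : ℝ) / 9) ≤ (1 + C₀)⁻¹ := by
    calc ρ ^ ((1 : ℝ) / 9)
      _ ≤ ((1 + C₀) ^ (-9 : ℝ)) ^ ((1 : ℝ) / 9) := by gcongr
      _ = (1 + C₀)⁻¹ := by
        rw [← rpow_mul (by positivity), ← rpow_neg_one]
        norm_num
  calc C₀ * ρ ^ ((1 : ℝ) / 3)
    _ = C₀ * ρ ^ ((1 : ℝ) / 9) * ρ ^ ((2 : ℝ) / 9) := by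
      rw [mul_assoc, ← rpow_add hρ]
      norm_num
    _ ≤ 1 * ρ ^ ((2 : ℝ) / 9) := by
      gcongr
      calc C₀ * ρ ^ ((1 : ℝ) / 9)
        _ ≤ C₀ * (1 + C₀)⁻¹ := by gcongr
        _ ≤ 1 := by
          rw [← div_eq_mul_inv, div_le_one (by positivity)]
          linarith
    _ = _ := one_mul _

lemma regularization_error_le {δ : ℝ} (hC₀ : 0 < C₀) (hρ : 0 < ρ) (hρ_one : ρ ≤ 1)
    (hδ : 1 / 9 ≤ δ) :
    76 * (C₀ * ρ ^ ((1 : ℝ) / 3)) ^ 3 * ρ ^ ((2 : ℝ) / 3 + δ) +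
        64 / 9 * (C₀ * ρ ^ ((1 : ℝ) / 3)) ^ 6 / (4 * ρ ^ ((2 : ℝ) / 9)) ≤
      (76 * C₀ ^ 3 + 2 * C₀ ^ 6) * ρ ^ ((5 : ℝ) / 3 + (1 : ℝ) / 9) := by
  have hcube : (ρ ^ ((1 : ℝ) / 3)) ^ 3 = ρ := by
    rw [← rpow_natCast, ← rpow_mul hρ.le]
    norm_num
  have hscattering : ρ ^ ((2 : ℝ) / 3 + δ) * ρ ≤ ρ ^ ((5 : ℝ) / 3 + (1 : ℝ) / 9) := by
    rw [← rpow_add_one hρ.ne']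
    exact rpow_le_rpow_of_exponent_ge hρ hρ_one (by linarith)
  have hcutoff : ρ ^ 2 / ρ ^ ((2 : ℝ) / 9) = ρ ^ ((5 : ℝ) / 3 + (1 : ℝ) / 9) := by
    rw [← rpow_natCast, ← rpow_sub hρ]
    norm_num
  calc 76 * (C₀ * ρ ^ ((1 : ℝ) / 3)) ^ 3 * ρ ^ ((2 : ℝ) / 3 + δ) +
        64 / 9 * (C₀ * ρ ^ ((1 : ℝ) / 3)) ^ 6 / (4 * ρ ^ ((2 : ℝ) / 9))
    _ = 76 * C₀ ^ 3 * (ρ ^ ((2 : ℝ) / 3 + δ) * ρ) +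
        16 / 9 * C₀ ^ 6 * (ρ ^ 2 / ρ ^ ((2 : ℝ) / 9)) := by
      rw [mul_pow, mul_pow _ _ 6, hcube, show 6 = 3 * 2 from rfl, pow_mul (ρ ^ _), hcube]
      ring
    _ ≤ 76 * C₀ ^ 3 * ρ ^ ((5 : ℝ) / 3 + (1 : ℝ) / 9) +
        2 * C₀ ^ 6 * ρ ^ ((5 : ℝ) / 3 + (1 : ℝ) / 9) := by
      rw [hcutoff]
      gcongr
      norm_num
    _ = _ := by ring

end Density

theorem remove_regularizations_general {C₀ : ℝ} (hC₀ : 0 < C₀) :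
    ∃ ρ₀ C : ℝ, 0 < ρ₀ ∧ 0 < C ∧
    ∀ (δ a ρ k₁ k₂ : ℝ) (χ G : E3 → ℝ), 1 / 9 ≤ δ → 0 < ρ → ρ ≤ ρ₀ →
      0 ≤ k₁ → k₁ ≤ C₀ * ρ ^ ((1 : ℝ) / 3) → 0 ≤ k₂ → k₂ ≤ C₀ * ρ ^ ((1 : ℝ) / 3) →
      AEStronglyMeasurable χ → (∀ p, |χ p| ≤ 1) →
      (∀ p, ‖p‖ ≤ 4 * ρ ^ ((2 : ℝ) / 9) → χ p = 1) → MemLp G ⊤ →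
      ‖belyakovConstant a k₁ k₂ G - regularizedConstant a k₁ k₂ (ρ ^ ((2 : ℝ) / 3 + δ)) χ G‖ₑ ≤
        ENNReal.ofReal (a ^ 2 * C * ρ ^ ((5 : ℝ) / 3 + (1 : ℝ) / 9)) * eLpNorm G ⊤ := by
  refine ⟨(1 + C₀) ^ (-9 : ℝ), 4 / π * (76 * C₀ ^ 3 + 2 * C₀ ^ 6), by positivity, by positivity,
    fun δ a ρ k₁ k₂ χ G hδ hρ hρ₀ h₁ h₁' h₂ h₂' hχm hχ hχ_one hG ↦ ?_⟩
  have hρ_one : ρ ≤ 1 :=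
    hρ₀.trans (rpow_le_one_of_one_le_of_nonpos (by linarith) (by norm_num))
  refine (enorm_belyakovConstant_sub_regularizedConstant_le (by positivity) ⟨h₁, h₁'⟩ ⟨h₂, h₂'⟩
    (mul_le_mul_of_nonneg_left (fermiMomentum_le_cutoff hC₀ hρ hρ₀) zero_le_four) (by positivity)
    hχm hχ hχ_one hG).trans ?_
  gcongr ENNReal.ofReal ?_ * _
  calc 4 * a ^ 2 / π * _
    _ ≤ 4 * a ^ 2 / π * ((76 * C₀ ^ 3 + 2 * C₀ ^ 6) * ρ ^ ((5 : ℝ) / 3 + (1 : ℝ) / 9)) := by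
      gcongr
      exact regularization_error_le hC₀ hρ hρ_one hδ
    _ = _ := by ring

/-- Lemma 5.5 (removal of regularizations): the `ε`- and `χ_<`-regularized constant `𝒞` agrees
with Belyakov's formula `n^{Bel}` up to an error `C ‖G‖_∞ ρ^{5/3+1/9}`, for all sufficiently
small densities `ρ`, Fermi momenta `k₁, k₂` of order `ρ^{1/3}`, a low-momentum cutoff `χ`, and
any bounded measurable `G`. -/
theorem remove_regularizations
    (δ c₀ C₀ a : ℝ) (hδ : 2 / 9 < δ) (hc₀ : 0 < c₀) (hC₀ : 0 < C₀) (ha : 0 < a) :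
    ∃ ρ₀ C : ℝ, 0 < ρ₀ ∧ 0 < C ∧
    ∀ (ρ k₁ k₂ : ℝ) (χ : E3 → ℝ) (G : E3 → ℝ),
      0 < ρ → ρ ≤ ρ₀ →
      c₀ * ρ ^ ((1 : ℝ) / 3) ≤ k₁ → k₁ ≤ C₀ * ρ ^ ((1 : ℝ) / 3) →
      c₀ * ρ ^ ((1 : ℝ) / 3) ≤ k₂ → k₂ ≤ C₀ * ρ ^ ((1 : ℝ) / 3) →
      Measurable χ → (∀ p, 0 ≤ χ p ∧ χ p ≤ 1) →
      (∀ p : E3, ‖p‖ ≤ 4 * ρ ^ ((2 : ℝ) / 9) → χ p = 1) →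
      (∀ p : E3, 5 * ρ ^ ((2 : ℝ) / 9) ≤ ‖p‖ → χ p = 0) →
      Measurable G → (∃ M : ℝ, ∀ y, |G y| ≤ M) →
      ENNReal.ofReal
        |(a ^ 2 / π ^ 4) *
            (∫ p : E3, ∫ r in {r : E3 | ‖r‖ ≤ k₁ ∧ k₁ < ‖r + p‖},
              ∫ r' in {r' : E3 | ‖r'‖ ≤ k₂ ∧ k₂ < ‖r' - p‖},
                (G (r + p) + G (-r) + G (r' - p) + G (-r')) /
                  (‖r + p‖ ^ 2 - ‖r‖ ^ 2 + ‖r' - p‖ ^ 2 - ‖r'‖ ^ 2) ^ 2)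
          - (a ^ 2 / π ^ 4) *
            (∫ p : E3, ∫ r in {r : E3 | ‖r‖ ≤ k₁ ∧ k₁ < ‖r + p‖},
              ∫ r' in {r' : E3 | ‖r'‖ ≤ k₂ ∧ k₂ < ‖r' - p‖},
                (G (r + p) + G (-r) + G (r' - p) + G (-r')) * χ p ^ 2 /
                  (‖r + p‖ ^ 2 - ‖r‖ ^ 2 + ‖r' - p‖ ^ 2 - ‖r'‖ ^ 2
                    + 2 * ρ ^ ((2 : ℝ) / 3 + δ)) ^ 2)|
        ≤ ENNReal.ofReal (C * ρ ^ ((5 : ℝ) / 3 + (1 : ℝ) / 9)) * eLpNorm G ⊤ volume := by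
  obtain ⟨ρ₀, C, hρ₀, hC, hbound⟩ := remove_regularizations_general hC₀
  refine ⟨ρ₀, a ^ 2 * C, hρ₀, by positivity, fun ρ k₁ k₂ χ G hρ hρρ₀ h₁ h₁' h₂ h₂' hχm hχ hχ_one _
    hGm ⟨M, hM⟩ ↦ ?_⟩
  have h := hbound δ a ρ k₁ k₂ χ G (by linarith) hρ hρρ₀ ((by positivity : 0 ≤ c₀ * _).trans h₁) h₁'
    ((by positivity : 0 ≤ c₀ * _).trans h₂) h₂' hχm.aestronglyMeasurable
    (fun p ↦ abs_le.2 ⟨by linarith [(hχ p).1], (hχ p).2⟩) hχ_one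
    (memLp_top_of_bound hGm.aestronglyMeasurable M (.of_forall hM))
  simpa only [belyakovConstant, regularizedConstant, iteratedPairIntegral, fermiLune, pairSum,
    pairEnergy, energyGain, Real.enorm_eq_ofReal_abs, ← add_sub_assoc, ← sub_eq_add_neg] using h
end
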